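/- arXiv:2308.12702 — 3 statements merged into one kernel-verified Lean document; each statement's English description precedes it below -/
import Mathlib

section
/- For every integer n ≥ 2 and every continuous map f : S^{n-1} → ℝ^{n-2}, there exist vectors v_1, v_2 ∈ S^{n-1} with ⟨v_1, v_2⟩ = 0 such that f(v_1) = f(v_2). -/
open MvPolynomial

namespace FlipBU

section Alg
variable {n : ℕ} (d : ℕ) (g : Fin n → MvPolynomial (Fin n) ℝ)

/-- `i` is the first index (below `k`) at which the exponent is at least `d`. -/
def IsFirst (k : ℕ) (a : Fin n →₀ ℕ) (i : Fin n) : Prop :=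
  i.val < k ∧ d ≤ a i ∧ ∀ j < i, a j < d

variable {d} in
lemma IsFirst.unique {k : ℕ} {a : Fin n →₀ ℕ} {i j : Fin n}
    (hi : IsFirst d k a i) (hj : IsFirst d k a j) : i = j := by
  rcases lt_trichotomy i j with h | h | h
  · have := hj.2.2 i h
    have := hi.2.1
    omega
  · exact h
  · have := hi.2.2 j h
    have := hj.2.1
    omega

lemma exists_isFirst {k : ℕ} {a : Fin n →₀ ℕ} {i : Fin n} (hi : i.val < k) (h : d ≤ a i) :
    ∃ j, IsFirst d k a j := by
  induction i using WellFoundedLT.induction with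
  | _ i ih =>
    by_cases hh : ∃ j < i, d ≤ a j
    · obtain ⟨j, hj, hj2⟩ := hh
      exact ih j hj (lt_trans hj hi) hj2
    · push Not at hh
      exact ⟨i, hi, h, hh⟩

open Classical in
/-- The perturbation operator. -/
noncomputable def E (k : ℕ) : MvPolynomial (Fin n) ℝ →ₗ[ℝ] MvPolynomial (Fin n) ℝ :=
  (basisMonomials (Fin n) ℝ).constr ℝ fun a =>
    if h : ∃ i, IsFirst d k a i then
      monomial (a - Finsupp.single h.choose d) 1 * g h.choose
    else 0

lemma E_of_isFirst {k : ℕ} {a : Fin n →₀ ℕ} {i : Fin n} (h : IsFirst d k a i) :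
    E d g k (monomial a 1) = monomial (a - Finsupp.single i d) 1 * g i := by
  have h' : ∃ i, IsFirst d k a i := ⟨i, h⟩
  have e : h'.choose = i := h'.choose_spec.unique h
  have := (basisMonomials (Fin n) ℝ).constr_basis ℝ (fun a => by
    classical exact if h : ∃ i, IsFirst d k a i then
      monomial (a - Finsupp.single h.choose d) 1 * g h.choose
    else 0) a
  rw [coe_basisMonomials] at this
  rw [E, this, dif_pos h', e]

lemma E_of_not {k : ℕ} {a : Fin n →₀ ℕ} (h : ¬ ∃ i, IsFirst d k a i) :
    E d g k (monomial a 1) = 0 := by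
  have := (basisMonomials (Fin n) ℝ).constr_basis ℝ (fun a => by
    classical exact if h : ∃ i, IsFirst d k a i then
      monomial (a - Finsupp.single h.choose d) 1 * g h.choose
    else 0) a
  rw [coe_basisMonomials] at this
  rw [E, this, dif_neg h]

variable {g} in
lemma E_deg (hg : ∀ i, (g i).totalDegree ≤ d) (k N : ℕ) :
    restrictTotalDegree (Fin n) ℝ N ≤ (restrictTotalDegree (Fin n) ℝ N).comap (E d g k) := by
  conv_lhs => rw [restrictTotalDegree, restrictSupport_eq_span]
  rw [Submodule.span_le]
  rintro _ ⟨a, ha, rfl⟩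
  simp only [Set.mem_ofPred_eq] at ha
  simp only [Submodule.comap_coe, Set.mem_preimage, SetLike.mem_coe]
  by_cases h : ∃ i, IsFirst d k a i
  · obtain ⟨i, hi⟩ := h
    rw [E_of_isFirst d g hi, mem_restrictTotalDegree]
    refine (totalDegree_mul _ _).trans ?_
    have h1 := totalDegree_monomial_le (a - Finsupp.single i d) (1 : ℝ)
    have h2 : a - Finsupp.single i d + Finsupp.single i d = a :=
      tsub_add_cancel_of_le (by simpa using hi.2.1)
    have h3 : (a.sum fun _ e => e) = ((a - Finsupp.single i d).sum fun _ e => e) + d := by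
      conv_lhs => rw [← h2]
      rw [Finsupp.sum_add_index' (by simp) (by simp)]
      simp
    have h4 := hg i
    simp only [Function.id_def] at h1
    omega
  · rw [E_of_not d g h]
    exact Submodule.zero_mem _

/-- The perturbed operator. -/
noncomputable def T (t : ℝ) (k : ℕ) : MvPolynomial (Fin n) ℝ →ₗ[ℝ] MvPolynomial (Fin n) ℝ :=
  t • LinearMap.id + E d g k

/-- The perturbed polynomials. -/
noncomputable def F (t : ℝ) (i : Fin n) : MvPolynomial (Fin n) ℝ := t • X i ^ d + g i

lemma T_of_isFirst (t : ℝ) {k : ℕ} {a : Fin n →₀ ℕ} {i : Fin n} (h : IsFirst d k a i) :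
    T d g t k (monomial a 1) = monomial (a - Finsupp.single i d) 1 * F d g t i := by
  have h2 : a - Finsupp.single i d + Finsupp.single i d = a :=
      tsub_add_cancel_of_le (by simpa using h.2.1)
  have : (monomial a (1 : ℝ)) = monomial (a - Finsupp.single i d) 1 * X i ^ d := by
    conv_lhs => rw [← h2]
    rw [X_pow_eq_monomial, monomial_mul, one_mul]
  rw [T, F, mul_add, LinearMap.add_apply, E_of_isFirst d g h, LinearMap.smul_apply, LinearMap.id_apply,
    mul_smul_comm, ← this]

lemma T_of_not (t : ℝ) {k : ℕ} {a : Fin n →₀ ℕ} (h : ¬ ∃ i, IsFirst d k a i) :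
    T d g t k (monomial a 1) = t • monomial a 1 := by
  rw [T, LinearMap.add_apply, E_of_not d g h, add_zero, LinearMap.smul_apply, LinearMap.id_apply]

variable {g} in
lemma countable_bad (hg : ∀ i, (g i).totalDegree ≤ d) (k : ℕ) :
    {μ : ℝ | Module.End.HasEigenvalue (E d g k) μ}.Countable := by
  have : {μ : ℝ | Module.End.HasEigenvalue (E d g k) μ} ⊆
      ⋃ N : ℕ, {μ : ℝ | Module.End.HasEigenvalue
        ((E d g k).restrict (p := restrictTotalDegree (Fin n) ℝ N)
          (q := restrictTotalDegree (Fin n) ℝ N) (fun x hx => E_deg d hg k N hx)) μ} := by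
    intro μ hμ
    obtain ⟨v, hv⟩ := Module.End.HasEigenvalue.exists_hasEigenvector hμ
    refine Set.mem_iUnion.2 ⟨v.totalDegree, ?_⟩
    have hvm : v ∈ restrictTotalDegree (Fin n) ℝ v.totalDegree :=
      (mem_restrictTotalDegree _ _ _).2 le_rfl
    refine Module.End.hasEigenvalue_of_hasEigenvector (x := ⟨v, hvm⟩) ?_
    refine ⟨Module.End.mem_eigenspace_iff.2 (Subtype.ext ?_), ?_⟩
    · simpa using hv.apply_eq_smul
    · intro h
      exact hv.2 (congrArg Subtype.val h)
  refine Set.Countable.mono this (Set.countable_iUnion fun N => ?_)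
  exact (Module.End.finite_hasEigenvalue _).countable

variable {g} in
lemma exists_good (hg : ∀ i, (g i).totalDegree ≤ d) {ε : ℝ} (hε : 0 < ε) :
    ∃ t, 0 < t ∧ t < ε ∧ ∀ k, Function.Bijective (T d g t k) := by
  have hc : (⋃ k, {μ : ℝ | Module.End.HasEigenvalue (E d g k) μ}).Countable :=
    Set.countable_iUnion fun k => countable_bad d hg k
  obtain ⟨s, hs1, hs2⟩ := (hc.dense_compl ℝ).exists_between (show -ε < 0 by linarith)
  refine ⟨-s, by linarith [hs2.2], by linarith [hs2.1], fun k => ?_⟩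
  have hs : ¬ Module.End.HasEigenvalue (E d g k) s := fun h => hs1 (Set.mem_iUnion.2 ⟨k, h⟩)
  have hinj : Function.Injective (T d g (-s) k) := by
    rw [injective_iff_map_eq_zero]
    intro p hp
    by_contra hne
    refine hs (Module.End.hasEigenvalue_of_hasEigenvector (x := p)
      ⟨Module.End.mem_eigenspace_iff.2 ?_, hne⟩)
    simp only [T, LinearMap.add_apply, LinearMap.smul_apply, LinearMap.id_apply, neg_smul] at hp
    exact (neg_add_eq_zero.1 hp).symm
  refine ⟨hinj, fun q => ?_⟩
  have hT : ∀ x ∈ restrictTotalDegree (Fin n) ℝ q.totalDegree,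
      T d g (-s) k x ∈ restrictTotalDegree (Fin n) ℝ q.totalDegree := fun x hx =>
    Submodule.add_mem _ (Submodule.smul_mem _ _ hx) (E_deg d hg k _ hx)
  have hi2 : Function.Injective ((T d g (-s) k).restrict hT) := by
    intro x y hxy
    exact Subtype.ext (hinj (congrArg Subtype.val hxy))
  obtain ⟨y, hy⟩ := (LinearMap.injective_iff_surjective.1 hi2)
    ⟨q, (mem_restrictTotalDegree _ _ _).2 le_rfl⟩
  exact ⟨y, congrArg Subtype.val hy⟩

/-- reduced polynomials -/
noncomputable def B (n k : ℕ) : Submodule ℝ (MvPolynomial (Fin n) ℝ) :=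
  restrictSupport ℝ {a | ∀ i : Fin n, i.val < k → a i < d}

/-- span of the relations -/
noncomputable def J (t : ℝ) (k : ℕ) : Submodule ℝ (MvPolynomial (Fin n) ℝ) :=
  Submodule.span ℝ {p | ∃ (i : Fin n) (b : Fin n →₀ ℕ), i.val < k ∧ (∀ j < i, b j < d) ∧
    p = monomial b 1 * F d g t i}

lemma J_mono (t : ℝ) {k l : ℕ} (h : k ≤ l) : J d g t k ≤ J d g t l := by
  refine Submodule.span_mono ?_
  rintro p ⟨i, b, hi, hb, rfl⟩
  exact ⟨i, b, hi.trans_le h, hb, rfl⟩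

lemma B_sup_J (t : ℝ) (k : ℕ) (hs : Function.Surjective (T d g t k)) :
    B d n k ⊔ J d g t k = ⊤ := by
  rw [eq_top_iff, ← LinearMap.range_eq_top.2 hs, LinearMap.range_eq_map,
    ← (basisMonomials (Fin n) ℝ).span_eq, Submodule.map_span, Submodule.span_le]
  rintro _ ⟨_, ⟨a, rfl⟩, rfl⟩
  rw [coe_basisMonomials]
  by_cases h : ∃ i, IsFirst d k a i
  · obtain ⟨i, hi⟩ := h
    simp only [T_of_isFirst d g t hi]
    refine Submodule.mem_sup_right (Submodule.subset_span ⟨i, _, hi.1, fun j hj => ?_, rfl⟩)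
    exact lt_of_le_of_lt (by simp) (hi.2.2 j hj)
  · simp only [T_of_not d g t h]
    refine Submodule.mem_sup_left (Submodule.smul_mem _ _ ?_)
    refine (monomial_mem_restrictSupport ℝ).2 (Or.inl fun i hi => ?_)
    by_contra hh
    exact h (exists_isFirst d hi (not_lt.1 hh))

lemma J_ideal (t : ℝ) (hs : ∀ k, Function.Surjective (T d g t k)) (k : ℕ) :
    ∀ p ∈ J d g t k, ∀ q, q * p ∈ J d g t k := by
  induction k with
  | zero =>
    intro p hp q
    have : p = 0 := by simpa [J] using hp
    rw [this, mul_zero]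
    exact Submodule.zero_mem _
  | succ k ih =>
    intro p hp q
    induction hp using Submodule.span_induction with
    | zero => rw [mul_zero]; exact Submodule.zero_mem _
    | add x y _ _ hx hy => rw [mul_add]; exact Submodule.add_mem _ hx hy
    | smul c x _ hx => rw [mul_smul_comm]; exact Submodule.smul_mem _ _ hx
    | mem x hx =>
      obtain ⟨i, b, hi, hb, rfl⟩ := hx
      by_cases hik : i.val < k
      · exact J_mono d g t (Nat.le_succ k) (ih _ (Submodule.subset_span ⟨i, b, hik, hb, rfl⟩) q)
      · have hik' : i.val = k := by omega
        rw [← mul_assoc]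
        have hm : q * monomial b 1 ∈ B d n k ⊔ J d g t k := by
          rw [B_sup_J d g t k (hs k)]; trivial
        obtain ⟨u, hu, v, hv, huv⟩ := Submodule.mem_sup.1 hm
        rw [← huv, add_mul]
        refine Submodule.add_mem _ ?_ ?_
        · clear huv
          rw [B, restrictSupport_eq_span] at hu
          induction hu using Submodule.span_induction with
          | zero => rw [zero_mul]; exact Submodule.zero_mem _
          | add x y _ _ hx hy => rw [add_mul]; exact Submodule.add_mem _ hx hy
          | smul c x _ hx => rw [smul_mul_assoc]; exact Submodule.smul_mem _ _ hx
          | mem x hx =>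
            obtain ⟨a, ha, rfl⟩ := hx
            exact Submodule.subset_span ⟨i, a, hi, fun j hj => ha j (hik' ▸ hj), rfl⟩
        · rw [mul_comm]
          exact J_mono d g t (Nat.le_succ k) (ih _ hv _)

lemma J_disj (t : ℝ) (ht : t ≠ 0) (k : ℕ) (hi : Function.Injective (T d g t k)) :
    Disjoint (J d g t k) (B d n k) := by
  rw [Submodule.disjoint_def]
  intro x hxJ hxB
  have hB : ∀ y ∈ B d n k, T d g t k y = t • y := by
    intro y hy
    rw [B, restrictSupport_eq_span] at hy
    induction hy using Submodule.span_induction with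
    | zero => simp
    | add x y _ _ hx hy => rw [map_add, hx, hy, smul_add]
    | smul c x _ hx => rw [map_smul, hx, smul_comm]
    | mem x hx =>
      obtain ⟨a, ha, rfl⟩ := hx
      refine T_of_not d g t ?_
      rintro ⟨i, hi⟩
      have := ha i hi.1
      have := hi.2.1
      omega
  have hJ : J d g t k ≤ (restrictSupport ℝ {a | ∀ i : Fin n, i.val < k → a i < d}ᶜ).map
      (T d g t k) := by
    rw [J, Submodule.span_le]
    rintro _ ⟨i, b, hik, hb, rfl⟩
    have hf : IsFirst d k (b + Finsupp.single i d) i := by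
      refine ⟨hik, by simp, fun j hj => ?_⟩
      simpa [Finsupp.single_apply, hj.ne'] using hb j hj
    refine ⟨monomial (b + Finsupp.single i d) 1, ?_, ?_⟩
    · refine (monomial_mem_restrictSupport ℝ).2 (Or.inl fun h => ?_)
      have := h i hik
      simp at this
    · rw [T_of_isFirst d g t hf, add_tsub_cancel_right]
  obtain ⟨y, hy, hyx⟩ := hJ hxJ
  have h2 : T d g t k (t⁻¹ • x) = x := by
    rw [map_smul, hB x hxB, smul_smul, inv_mul_cancel₀ ht, one_smul]
  have h3 : y = t⁻¹ • x := hi (hyx.trans h2.symm)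
  have h4 : y ∈ B d n k := h3 ▸ Submodule.smul_mem _ _ hxB
  have h5 : y = 0 := by
    rw [← support_eq_empty, Finset.eq_empty_iff_forall_notMem]
    intro a ha
    exact ((mem_restrictSupport_iff ℝ).1 hy ha) ((mem_restrictSupport_iff ℝ).1 h4 ha)
  rw [← hyx, h5, map_zero]

lemma finrank_B : Module.finrank ℝ (B d n n) = d ^ n := by
  rw [B, Module.finrank_eq_nat_card_basis (basisRestrictSupport ℝ _)]
  have e : {a : Fin n →₀ ℕ | ∀ i : Fin n, i.val < n → a i < d} ≃ (Fin n → Fin d) :=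
    { toFun := fun a i => ⟨a.1 i, a.2 i i.2⟩
      invFun := fun b => ⟨Finsupp.equivFunOnFinite.symm fun i => (b i).val, fun i _ => by simp⟩
      left_inv := fun a => by ext; simp
      right_inv := fun b => by ext; simp }
  rw [Nat.card_congr e]
  simp

end Alg

lemma exists_odd_quotient (A : Type) [CommRing A] [Algebra ℝ A] (m : ℕ) :
    ∀ (M : Type) [AddCommGroup M] [Module ℝ M] [Module A M] [IsScalarTower ℝ A M]
      [Module.Finite ℝ M], Module.finrank ℝ M = m → Odd m →
      ∃ I : Ideal A, I.IsMaximal ∧ Odd (Module.finrank ℝ (A ⧸ I)) := by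
  induction m using Nat.strong_induction_on with
  | _ m ih =>
    intro M _ _ _ _ _ hm hodd
    by_cases hsim : IsSimpleModule A M
    · obtain ⟨I, hI, ⟨e⟩⟩ := isSimpleModule_iff_quot_maximal.1 hsim
      refine ⟨I, hI, ?_⟩
      rwa [← (e.restrictScalars ℝ).finrank_eq, hm]
    · have hnt : Nontrivial M := by
        by_contra h
        rw [not_nontrivial_iff_subsingleton] at h
        rw [Module.finrank_zero_of_subsingleton] at hm
        subst hm
        exact absurd hodd (by decide)
      have : ∃ N : Submodule A M, N ≠ ⊥ ∧ N ≠ ⊤ := by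
        by_contra! h
        refine hsim ((isSimpleModule_iff A M).2 { eq_bot_or_eq_top := fun N => ?_ })
        by_cases hN : N = ⊥
        · exact Or.inl hN
        · exact Or.inr (h N hN)
      obtain ⟨N, h1, h2⟩ := this
      let N' : Submodule ℝ M := N.restrictScalars ℝ
      have hN1 : N' ≠ ⊥ := fun h => h1 ((Submodule.restrictScalars_eq_bot_iff ℝ A M).1 h)
      have hN2 : N' ≠ ⊤ := fun h => h2 ((Submodule.restrictScalars_eq_top_iff ℝ A M).1 h)
      have hadd := Submodule.finrank_quotient_add_finrank N'
      have hlt := Submodule.finrank_lt hN2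
      have hpos : 0 < Module.finrank ℝ N' := by
        rw [pos_iff_ne_zero]
        exact fun h => hN1 (Submodule.finrank_eq_zero.1 h)
      have hq : Module.finrank ℝ (M ⧸ N) = Module.finrank ℝ (M ⧸ N') :=
        (Submodule.Quotient.restrictScalarsEquiv ℝ N).finrank_eq.symm
      by_cases hp : Odd (Module.finrank ℝ N')
      · have : Module.Finite ℝ N := inferInstanceAs (Module.Finite ℝ N')
        have : IsScalarTower ℝ A N := ⟨fun r a x => Subtype.ext (smul_assoc r a (x : M))⟩
        exact @ih _ (hm ▸ hlt) N _ _ _ this ‹_› rfl hp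
      · have hp2 : Odd (Module.finrank ℝ (M ⧸ N)) := by
          rw [hq]
          rw [← hm, ← hadd] at hodd
          by_contra hcon
          rw [Nat.not_odd_iff_even] at hp hcon
          exact (Nat.not_odd_iff_even.2 (hcon.add hp)) hodd
        have : Module.Finite ℝ (M ⧸ N) := Module.finite_of_finrank_pos hp2.pos
        exact ih _ (by omega) (M ⧸ N) rfl hp2

lemma exists_algHom (A : Type) [CommRing A] [Algebra ℝ A] [Module.Finite ℝ A]
    (h : Odd (Module.finrank ℝ A)) : Nonempty (A →ₐ[ℝ] ℝ) := by
  obtain ⟨I, hI, ho⟩ := exists_odd_quotient A _ A rfl h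
  let _ := Ideal.Quotient.field I
  rcases Real.nonempty_algEquiv_or (A ⧸ I) with ⟨⟨e⟩⟩ | ⟨⟨e⟩⟩
  · exact ⟨e.toAlgHom.comp (Ideal.Quotient.mkₐ ℝ I)⟩
  · rw [e.toLinearEquiv.finrank_eq, Complex.finrank_real_complex] at ho
    exact absurd ho (by decide)

theorem exists_zero {n d : ℕ} (hd : Odd d) (g : Fin n → MvPolynomial (Fin n) ℝ)
    (hg : ∀ i, (g i).totalDegree ≤ d) {ε : ℝ} (hε : 0 < ε) :
    ∃ t, 0 < t ∧ t < ε ∧ ∃ x : Fin n → ℝ, ∀ i, t * x i ^ d + eval x (g i) = 0 := by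
  obtain ⟨t, ht, htε, hbij⟩ := exists_good d hg hε
  refine ⟨t, ht, htε, ?_⟩
  let I : Ideal (MvPolynomial (Fin n) ℝ) :=
    { J d g t n with
      smul_mem' := fun q p hp => J_ideal d g t (fun k => (hbij k).2) n p hp q }
  have hI : I.restrictScalars ℝ = J d g t n := rfl
  have hc : IsCompl (J d g t n) (B d n n) :=
    ⟨J_disj d g t ht.ne' n (hbij n).1, codisjoint_iff.2 (by
      rw [sup_comm]; exact B_sup_J d g t n (hbij n).2)⟩
  let e : (MvPolynomial (Fin n) ℝ ⧸ I) ≃ₗ[ℝ] B d n n :=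
    (Submodule.Quotient.restrictScalarsEquiv ℝ I).symm ≪≫ₗ
      Submodule.quotientEquivOfIsCompl (J d g t n) (B d n n) hc
  have hfr : Module.finrank ℝ (MvPolynomial (Fin n) ℝ ⧸ I) = d ^ n := by
    rw [e.finrank_eq, finrank_B]
  have hodd : Odd (Module.finrank ℝ (MvPolynomial (Fin n) ℝ ⧸ I)) := hfr ▸ hd.pow
  have : Module.Finite ℝ (MvPolynomial (Fin n) ℝ ⧸ I) :=
    Module.finite_of_finrank_pos hodd.pos
  obtain ⟨φ⟩ := exists_algHom _ hodd
  let ψ : MvPolynomial (Fin n) ℝ →ₐ[ℝ] ℝ := φ.comp (Ideal.Quotient.mkₐ ℝ I)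
  refine ⟨fun i => ψ (X i), fun i => ?_⟩
  have hψ : ∀ p, ψ p = eval (fun i => ψ (X i)) p := by
    intro p
    conv_lhs => rw [MvPolynomial.aeval_unique ψ]
    rfl
  have hF : F d g t i ∈ I := by
    have : J d g t (i.val + 1) ≤ J d g t n := J_mono d g t i.2
    refine Submodule.subset_span ⟨i, 0, i.2, ?_, ?_⟩
    · intro j _; simpa using hd.pos
    · simp
  have h0 : ψ (F d g t i) = 0 := by
    have : Ideal.Quotient.mk I (F d g t i) = 0 := Ideal.Quotient.eq_zero_iff_mem.2 hF
    simp only [ψ, AlgHom.comp_apply, Ideal.Quotient.mkₐ_eq_mk, this, map_zero]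
  rw [F, map_add, map_smul, map_pow, hψ (g i)] at h0
  exact h0

lemma hom_eval {σ : Type*} {p : MvPolynomial σ ℝ} {k : ℕ} (hp : p.IsHomogeneous k)
    (c : ℝ) (y : σ → ℝ) : eval (fun i => c * y i) p = c ^ k * eval y p := by
  rw [eval_eq, eval_eq, Finset.mul_sum]
  refine Finset.sum_congr rfl fun a ha => ?_
  have h1 : a.degree = k := by
    have := hp (mem_support_iff.1 ha)
    rw [Finsupp.degree_eq_weight_one]
    exact this
  simp only [mul_pow, Finset.prod_mul_distrib]
  rw [Finset.prod_pow_eq_pow_sum, ← h1]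
  rw [Finsupp.degree_apply]
  ring

/-- the homogenized odd part -/
noncomputable def oddHom {m : ℕ} (D : ℕ) (p : MvPolynomial (Fin m) ℝ) : MvPolynomial (Fin m) ℝ :=
  ∑ k ∈ Finset.range (D + 1), homogeneousComponent (2 * k + 1) p * (∑ j, X j ^ 2) ^ (D - k)

lemma oddHom_hom {m : ℕ} (D : ℕ) (p : MvPolynomial (Fin m) ℝ) :
    (oddHom D p).IsHomogeneous (2 * D + 1) := by
  refine IsHomogeneous.sum _ _ _ fun k hk => ?_
  have h : (∑ j : Fin m, (X j : MvPolynomial (Fin m) ℝ) ^ 2).IsHomogeneous 2 :=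
    IsHomogeneous.sum _ _ _ fun j _ => isHomogeneous_X_pow j 2
  have h2 := (homogeneousComponent_isHomogeneous (2 * k + 1) p).mul (h.pow (D - k))
  have : k ≤ D := by simpa [Nat.lt_succ_iff] using hk
  have e : 2 * k + 1 + 2 * (D - k) = 2 * D + 1 := by omega
  rwa [e] at h2

lemma sum_even_odd (f : ℕ → ℝ) (N : ℕ) :
    ∑ j ∈ Finset.range (2 * N), f j = ∑ k ∈ Finset.range N, (f (2 * k) + f (2 * k + 1)) := by
  induction N with
  | zero => simp
  | succ N ih =>
    rw [Finset.sum_range_succ _ N, ← ih, show 2 * (N + 1) = 2 * N + 1 + 1 by ring,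
      Finset.sum_range_succ, Finset.sum_range_succ, add_assoc]

lemma eval_eq_sum {m : ℕ} {D : ℕ} {p : MvPolynomial (Fin m) ℝ} (hD : p.totalDegree ≤ D)
    (y : Fin m → ℝ) :
    eval y p = ∑ j ∈ Finset.range (2 * (D + 1)), eval y (homogeneousComponent j p) := by
  conv_lhs => rw [← sum_homogeneousComponent p, map_sum]
  refine Finset.sum_subset ?_ ?_
  · intro j hj
    simp only [Finset.mem_range] at hj ⊢
    omega
  · intro j _ hj
    simp only [Finset.mem_range, not_lt] at hj
    rw [homogeneousComponent_eq_zero _ _ (by omega), map_zero]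

lemma oddHom_eval {m : ℕ} {D : ℕ} {p : MvPolynomial (Fin m) ℝ} (hD : p.totalDegree ≤ D)
    {y : Fin m → ℝ} (hy : ∑ j, y j ^ 2 = 1) :
    eval y (oddHom D p) = (eval y p - eval (fun i => -1 * y i) p) / 2 := by
  rw [eval_eq_sum hD y, eval_eq_sum hD, sum_even_odd, sum_even_odd, ← Finset.sum_sub_distrib,
    Finset.sum_div, oddHom, map_sum]
  refine Finset.sum_congr rfl fun k _ => ?_
  rw [hom_eval (homogeneousComponent_isHomogeneous (2 * k) p),
    hom_eval (homogeneousComponent_isHomogeneous (2 * k + 1) p)]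
  have e1 : (-1 : ℝ) ^ (2 * k) = 1 := by rw [pow_mul]; simp
  have e2 : (-1 : ℝ) ^ (2 * k + 1) = -1 := by rw [pow_succ, e1]; simp
  rw [e1, e2]
  simp only [map_mul, map_pow, map_sum, eval_X, hy, one_pow]
  ring

lemma totalDegree_aeval_cons {m : ℕ} {d : ℕ} {p : MvPolynomial (Fin (m + 1)) ℝ}
    (hp : p.totalDegree ≤ d) :
    (aeval (Fin.cons 1 X : Fin (m + 1) → MvPolynomial (Fin m) ℝ) p).totalDegree ≤ d := by
  rw [aeval_def, eval₂_eq]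
  refine (totalDegree_finsetSum _ _).trans (Finset.sup_le fun a ha => ?_)
  refine (totalDegree_mul _ _).trans ?_
  rw [algebraMap_eq, totalDegree_C, zero_add]
  refine (totalDegree_finsetProd _ _).trans ?_
  refine le_trans ?_ ((le_totalDegree ha).trans hp)
  refine Finset.sum_le_sum fun i _ => ?_
  refine (totalDegree_pow _ _).trans ?_
  refine le_trans (Nat.mul_le_mul_left _ (?_ : _ ≤ 1)) (by simp)
  refine Fin.cases ?_ (fun j => ?_) i
  · simp
  · simp [totalDegree_X]

lemma hom_zero {m D : ℕ} (G : Fin m → MvPolynomial (Fin (m + 1)) ℝ)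
    (hG : ∀ i, (G i).IsHomogeneous (2 * D + 1)) {ε : ℝ} (hε : 0 < ε) :
    ∃ y : Fin (m + 1) → ℝ, ∑ j, y j ^ 2 = 1 ∧ ∀ i, |eval y (G i)| ≤ ε := by
  obtain ⟨t, ht, htε, x, hx⟩ := exists_zero (n := m) (d := 2 * D + 1) ⟨D, rfl⟩
    (fun i => aeval (Fin.cons 1 X : Fin (m + 1) → MvPolynomial (Fin m) ℝ) (G i))
    (fun i => totalDegree_aeval_cons (hG i).totalDegree_le) hε
  let z : Fin (m + 1) → ℝ := Fin.cons 1 x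
  have hz : ∀ p : MvPolynomial (Fin (m + 1)) ℝ,
      eval x (aeval (Fin.cons 1 X : Fin (m + 1) → MvPolynomial (Fin m) ℝ) p) = eval z p := by
    intro p
    have : (aeval x).comp (aeval (Fin.cons 1 X : Fin (m + 1) → MvPolynomial (Fin m) ℝ))
        = (aeval z : MvPolynomial (Fin (m + 1)) ℝ →ₐ[ℝ] ℝ) := by
      ext i
      refine Fin.cases ?_ (fun j => ?_) i <;> simp [z]
    exact DFunLike.congr_fun this p
  have hs : 0 < ∑ j, z j ^ 2 := by
    rw [Fin.sum_univ_succ]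
    have : 0 ≤ ∑ j : Fin m, z j.succ ^ 2 := Finset.sum_nonneg fun _ _ => sq_nonneg _
    simp only [z, Fin.cons_zero] at this ⊢
    linarith
  set r := (√(∑ j, z j ^ 2))⁻¹ with hr
  have hr2 : r ^ 2 * ∑ j, z j ^ 2 = 1 := by
    rw [hr, inv_pow, Real.sq_sqrt hs.le, inv_mul_cancel₀ hs.ne']
  have hy : ∑ j, (r * z j) ^ 2 = 1 := by
    simp only [mul_pow]
    rw [← Finset.mul_sum, hr2]
  refine ⟨fun j => r * z j, hy, fun i => ?_⟩
  have h1 := hx i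
  rw [hz] at h1
  rw [hom_eval (hG i)]
  have h2 : r ^ (2 * D + 1) * eval z (G i) = - (t * (r * x i) ^ (2 * D + 1)) := by
    rw [mul_pow]
    linear_combination r ^ (2 * D + 1) * h1
  rw [h2, abs_neg, abs_mul, abs_of_pos ht, abs_pow]
  have h3 : (r * x i) ^ 2 ≤ 1 := by
    rw [← hy]
    have := Finset.single_le_sum (f := fun j => (r * z j) ^ 2) (fun _ _ => sq_nonneg _)
      (Finset.mem_univ i.succ)
    simpa [z] using this
  have h4 : |r * x i| ≤ 1 := (sq_le_one_iff_abs_le_one _).1 h3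
  have h5 : |r * x i| ^ (2 * D + 1) ≤ 1 := pow_le_one₀ (abs_nonneg _) h4
  nlinarith

/-- the sphere -/
def S (m : ℕ) : Set (Fin m → ℝ) := {y | ∑ j, y j ^ 2 = 1}

lemma S_compact (m : ℕ) : IsCompact (S m) := by
  refine Metric.isCompact_of_isClosed_isBounded ?_ ?_
  · exact isClosed_eq (by fun_prop) continuous_const
  · refine (Metric.isBounded_closedBall (x := (0 : Fin m → ℝ)) (r := 1)).subset ?_
    intro y hy
    rw [mem_closedBall_zero_iff, pi_norm_le_iff_of_nonneg zero_le_one]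
    intro i
    have hy' : ∑ j, y j ^ 2 = 1 := hy
    have := Finset.single_le_sum (f := fun j => y j ^ 2) (fun _ _ => sq_nonneg _)
      (Finset.mem_univ i)
    rw [hy'] at this
    exact (sq_le_one_iff_abs_le_one _).1 this

lemma approx {m : ℕ} (h : S m → ℝ) (hc : Continuous h) {ε : ℝ} (hε : 0 < ε) :
    ∃ p : MvPolynomial (Fin m) ℝ, ∀ y : S m, |eval y.1 p - h y| < ε := by
  have : CompactSpace (S m) := isCompact_iff_compactSpace.1 (S_compact m)
  let c : Fin m → C(S m, ℝ) := fun j => ⟨fun y => y.1 j,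
    (continuous_apply j).comp continuous_subtype_val⟩
  let A : Subalgebra ℝ C(S m, ℝ) := (aeval c : MvPolynomial (Fin m) ℝ →ₐ[ℝ] C(S m, ℝ)).range
  have hA : A.SeparatesPoints := by
    intro x y hxy
    obtain ⟨j, hj⟩ : ∃ j, x.1 j ≠ y.1 j := by
      by_contra! hh
      exact hxy (Subtype.ext (funext hh))
    exact ⟨_, ⟨c j, ⟨X j, by simp⟩, rfl⟩, hj⟩
  obtain ⟨⟨q, p, rfl⟩, hq⟩ :=
    ContinuousMap.exists_mem_subalgebra_near_continuous_of_separatesPoints A hA h hc ε hε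
  refine ⟨p, fun y => ?_⟩
  have e : (aeval c p : C(S m, ℝ)) y = eval y.1 p := by
    have : (ContinuousMap.evalAlgHom ℝ ℝ y).comp (aeval c) =
        (aeval y.1 : MvPolynomial (Fin m) ℝ →ₐ[ℝ] ℝ) := by
      ext i
      simp [c]
    exact DFunLike.congr_fun this p
  have := hq y
  rw [← e]
  exact this

theorem borsuk_ulam {m : ℕ} (h : Fin m → S (m + 1) → ℝ) (hc : ∀ i, Continuous (h i))
    (hodd : ∀ i (y y' : S (m + 1)), y'.1 = (fun j => -1 * y.1 j) → h i y' = - h i y) :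
    ∃ y, ∀ i, h i y = 0 := by
  have : CompactSpace (S (m + 1)) := isCompact_iff_compactSpace.1 (S_compact (m + 1))
  have hne : Nonempty (S (m + 1)) := ⟨⟨Fin.cons 1 0, by simp [S, Fin.sum_univ_succ]⟩⟩
  have key : ∀ ε > 0, ∃ y, ∀ i, |h i y| ≤ ε := by
    intro ε hε
    choose p hp using fun i => approx (h i) (hc i) (half_pos hε)
    let D := Finset.univ.sup fun i => (p i).totalDegree
    have hD : ∀ i, (p i).totalDegree ≤ D := fun i =>
      Finset.le_sup (f := fun i => (p i).totalDegree) (Finset.mem_univ i)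
    obtain ⟨y, hy, hyG⟩ := hom_zero (fun i => oddHom D (p i)) (fun i => oddHom_hom D (p i))
      (half_pos hε)
    have hy' : ∑ j, (-1 * y j) ^ 2 = 1 := by simpa using hy
    refine ⟨⟨y, hy⟩, fun i => ?_⟩
    have h1 := hyG i
    rw [oddHom_eval (hD i) hy] at h1
    have h2 := hp i ⟨y, hy⟩
    have h3 := hp i ⟨_, hy'⟩
    rw [hodd i ⟨y, hy⟩ ⟨_, hy'⟩ rfl] at h3
    simp only at h2 h3
    rw [abs_le] at h1 ⊢
    rw [abs_lt] at h2 h3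
    constructor <;> linarith [h1.1, h1.2, h2.1, h2.2, h3.1, h3.2]
  have hcont : Continuous fun y => ∑ i, |h i y| := by fun_prop
  obtain ⟨y0, -, hy0⟩ := isCompact_univ.exists_isMinOn Set.univ_nonempty hcont.continuousOn
  refine ⟨y0, ?_⟩
  have hle : ∑ i, |h i y0| ≤ 0 := by
    refine le_of_forall_pos_le_add fun δ hδ => ?_
    obtain ⟨y, hy⟩ := key (δ / (m + 1)) (by positivity)
    have h1 : ∑ i, |h i y0| ≤ ∑ i, |h i y| := hy0 (Set.mem_univ y)
    have h2 : ∑ i, |h i y| ≤ ∑ _i : Fin m, δ / (m + 1) := Finset.sum_le_sum fun i _ => hy i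
    have h3 : ∑ _i : Fin m, δ / (m + 1) ≤ δ := by
      simp only [Finset.sum_const, Finset.card_univ, Fintype.card_fin, nsmul_eq_mul]
      rw [← mul_div_assoc, div_le_iff₀ (by positivity)]
      nlinarith
    linarith
  intro i
  have h1 := Finset.single_le_sum (f := fun i => |h i y0|) (fun _ _ => abs_nonneg _)
    (Finset.mem_univ i)
  exact abs_nonpos_iff.1 (h1.trans hle)

lemma two_aux : ((√2 : ℝ)⁻¹) * (√2)⁻¹ = 1 / 2 := by
  rw [← mul_inv, Real.mul_self_sqrt (by norm_num)]; norm_num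

/-- the vector `(e₀ + y) / √2` -/
noncomputable def vec {m : ℕ} (y : S (m + 1)) :
    Metric.sphere (0 : EuclideanSpace ℝ (Fin (m + 2))) 1 :=
  ⟨WithLp.toLp 2 (fun i => (√2)⁻¹ * (Fin.cons 1 y.1 : Fin (m + 2) → ℝ) i), by
    have hy : ∑ j, y.1 j ^ 2 = 1 := y.2
    rw [mem_sphere_zero_iff_norm, EuclideanSpace.norm_eq, Real.sqrt_eq_one]
    simp only [Real.norm_eq_abs, sq_abs, mul_pow]
    rw [← Finset.mul_sum, Fin.sum_univ_succ]
    simp only [Fin.cons_zero, Fin.cons_succ, hy]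
    rw [pow_two, two_aux]; norm_num⟩

lemma coord_cont {m : ℕ} (j : Fin m) : Continuous fun y : S m => y.1 j :=
  (continuous_apply j).comp continuous_subtype_val

lemma vec_cont {m : ℕ} : Continuous (vec (m := m)) := by
  refine Continuous.subtype_mk ((PiLp.continuous_toLp 2 _).comp ?_) _
  refine continuous_pi fun i => continuous_const.mul ?_
  refine Fin.cases ?_ (fun j => ?_) i
  · simpa using continuous_const
  · simpa using coord_cont j

/-- the antipode -/
def antip {m : ℕ} (y : S m) : S m :=
  ⟨fun j => -1 * y.1 j, by
    have hy : ∑ j, y.1 j ^ 2 = 1 := y.2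
    simpa [S] using hy⟩

lemma antip_cont {m : ℕ} : Continuous (antip (m := m)) := by
  refine Continuous.subtype_mk (continuous_pi fun j => ?_) _
  exact continuous_const.mul (coord_cont j)

lemma antip_antip {m : ℕ} (y : S m) : antip (antip y) = y := by
  ext j; simp [antip]

lemma vec_inner {m : ℕ} (y : S (m + 1)) :
    inner ℝ (vec y : EuclideanSpace ℝ (Fin (m + 2))) (vec (antip y)) = 0 := by
  have hy : ∑ j, y.1 j ^ 2 = 1 := y.2
  simp only [vec, antip, PiLp.inner_apply]
  rw [Fin.sum_univ_succ]
  simp only [Fin.cons_zero, Fin.cons_succ, RCLike.inner_apply, conj_trivial]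
  have : ∀ j, (√2)⁻¹ * (-1 * y.1 j) * ((√2)⁻¹ * y.1 j) = -(1 / 2) * y.1 j ^ 2 := by
    intro j
    rw [← two_aux]; ring
  simp only [this]
  rw [← Finset.mul_sum, hy]
  linear_combination two_aux

end FlipBU

open scoped RealInnerProductSpace

/-- For every integer `n ≥ 2` and every continuous map `f : S^{n-1} → ℝ^{n-2}`,
there exist orthogonal `v₁ v₂` in the sphere with `f v₁ = f v₂`. -/
theorem flip_stiefel_sphere_pair (n : ℕ) (hn : 2 ≤ n)
    (f : Metric.sphere (0 : EuclideanSpace ℝ (Fin n)) 1 → EuclideanSpace ℝ (Fin (n - 2)))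
    (hf : Continuous f) :
    ∃ v₁ v₂ : Metric.sphere (0 : EuclideanSpace ℝ (Fin n)) 1,
      ⟪(v₁ : EuclideanSpace ℝ (Fin n)), (v₂ : EuclideanSpace ℝ (Fin n))⟫ = 0 ∧
      f v₁ = f v₂ := by
  obtain ⟨m, rfl⟩ := Nat.exists_eq_add_of_le' hn
  change Metric.sphere (0 : EuclideanSpace ℝ (Fin (m + 2))) 1 → EuclideanSpace ℝ (Fin m) at f
  obtain ⟨y, hy⟩ := FlipBU.borsuk_ulam (m := m)
    (fun i y => f (FlipBU.vec y) i - f (FlipBU.vec (FlipBU.antip y)) i)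
    (fun i => by
      have h1 : Continuous fun v => f v i := (EuclideanSpace.proj (𝕜 := ℝ) i).continuous.comp hf
      exact (h1.comp FlipBU.vec_cont).sub (h1.comp (FlipBU.vec_cont.comp FlipBU.antip_cont)))
    (fun i y y' hyy => by
      have : y' = FlipBU.antip y := Subtype.ext hyy
      subst this
      simp only [FlipBU.antip_antip]
      ring)
  refine ⟨FlipBU.vec y, FlipBU.vec (FlipBU.antip y), FlipBU.vec_inner y, ?_⟩
  ext i
  exact sub_eq_zero.1 (hy i)
end

section
/- For every integer n ≥ 4 and every continuous map f : S^{n-1} → ℝ^{⌊n/2⌋ - 2}, there exist pairwise orthogonal vectors v_1, v_2, v_3, v_4 ∈ S^{n-1} such that f(v_1) = f(v_2) and f(v_3) = f(v_4). -/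
open scoped RealInnerProductSpace

theorem odd_module_aux {A : Type} [CommRing A] [Algebra ℝ A] : ∀ (n : ℕ) (M : Type)
    [AddCommGroup M] [Module A M] [Module ℝ M] [IsScalarTower ℝ A M] [Module.Finite ℝ M],
    Module.finrank ℝ M = n → Odd n → Nonempty (A →ₐ[ℝ] ℝ) := by
  intro n
  induction n using Nat.strong_induction_on with
  | _ n ih =>
    intro M _ _ _ _ _ hM hn
    have hpos : 0 < Module.finrank ℝ M := by rw [hM]; exact hn.pos
    have : Nontrivial M := Module.nontrivial_of_finrank_pos hpos
    have : Module.Finite A M := Module.Finite.of_restrictScalars_finite ℝ A M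
    obtain ⟨N, hN⟩ := IsCoatomic.exists_coatom (α := Submodule A M)
    have hs : IsSimpleModule A (M ⧸ N) := isSimpleModule_iff_isCoatom.mpr hN
    obtain ⟨I, hI, ⟨e⟩⟩ := isSimpleModule_iff_quot_maximal.mp hs
    have hadd := (N.restrictScalars ℝ).finrank_quotient_add_finrank
    have hfq : Module.Finite ℝ (M ⧸ N) := 
      inferInstanceAs (Module.Finite ℝ (M ⧸ (N.restrictScalars ℝ)))
    let e' : (M ⧸ N) ≃ₗ[ℝ] (A ⧸ I) := e.restrictScalars ℝ
    have hfA : Module.Finite ℝ (A ⧸ I) := Module.Finite.equiv e'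
    have h1 : Module.finrank ℝ (M ⧸ (N.restrictScalars ℝ)) = Module.finrank ℝ (A ⧸ I) := 
      e'.finrank_eq
    let _ := Ideal.Quotient.field I
    have : Algebra.IsAlgebraic ℝ (A ⧸ I) := Algebra.IsAlgebraic.of_finite ℝ (A ⧸ I)
    rcases Real.nonempty_algEquiv_or (A ⧸ I) with ⟨⟨g⟩⟩ | ⟨⟨g⟩⟩
    · exact ⟨g.toAlgHom.comp (Ideal.Quotient.mkₐ ℝ I)⟩
    · have h2 : Module.finrank ℝ (A ⧸ I) = 2 := by
        rw [g.toLinearEquiv.finrank_eq, Complex.finrank_real_complex]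
      have hfN : Module.Finite ℝ N := inferInstanceAs (Module.Finite ℝ (N.restrictScalars ℝ))
      have h3 : Module.finrank ℝ N + 2 = n := by
        rw [← hM, ← hadd, h1, h2, add_comm]; rfl
      refine ih (Module.finrank ℝ N) (by omega) N rfl ?_
      rw [← h3] at hn
      rcases hn with ⟨k, hk⟩
      exact ⟨k - 1, by omega⟩

namespace BU
open MvPolynomial

variable {σ : Type} [Fintype σ] 

noncomputable def red (d : ℕ) (a : σ →₀ ℕ) : σ →₀ ℕ := a.mapRange (· % d) (Nat.zero_mod d)

noncomputable def ev {R : Type} [CommRing R] (h : σ → MvPolynomial σ R) (d : ℕ) (a : σ →₀ ℕ) :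
    MvPolynomial σ R := monomial (red d a) 1 * ∏ i, h i ^ (a i / d)

theorem ev_map {R S : Type} [CommRing R] [CommRing S] (φ : R →+* S)
    (h : σ → MvPolynomial σ R) (d : ℕ) (a : σ →₀ ℕ) :
    MvPolynomial.map φ (ev h d a) = ev (fun i => MvPolynomial.map φ (h i)) d a := by
  simp [ev, map_monomial]

theorem ev_hom {R : Type} [CommRing R] {h : σ → MvPolynomial σ R} {d : ℕ}
    (hh : ∀ i, (h i).IsHomogeneous d) (a : σ →₀ ℕ) : (ev h d a).IsHomogeneous a.degree := by
  have h1 : (monomial (red d a) (1 : R)).IsHomogeneous (red d a).degree :=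
    isHomogeneous_monomial _ rfl
  have h2 : (∏ i, h i ^ (a i / d)).IsHomogeneous (∑ i, d * (a i / d)) :=
    IsHomogeneous.prod _ _ _ fun i _ => (hh i).pow _
  have key := h1.mul h2
  suffices hs : a.degree = (red d a).degree + ∑ i, d * (a i / d) by
    rw [hs]; exact key
  rw [Finsupp.degree_eq_sum, Finsupp.degree_eq_sum, ← Finset.sum_add_distrib]
  refine Finset.sum_congr rfl fun i _ => ?_
  simp [red, Nat.mod_add_div]

theorem ev_X {R : Type} [CommRing R] (d : ℕ) (a : σ →₀ ℕ) : 
    ev (fun i => (X i : MvPolynomial σ R) ^ d) d a = monomial a 1 := by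
  classical
  have : ∏ i, ((X i : MvPolynomial σ R) ^ d) ^ (a i / d) = 
      monomial (a.mapRange (fun k => d * (k / d)) (by simp)) 1 := by
    rw [monomial_eq, Finsupp.prod_fintype _ _ (by simp)]
    simp [pow_mul]
  have h2 : red d a + a.mapRange (fun k => d * (k / d)) (by simp) = a := by
    ext i; simp [red, Nat.mod_add_div]
  rw [ev, this, monomial_mul, h2, one_mul]

abbrev T (σ : Type) (N : ℕ) := {a : σ →₀ ℕ // a.degree = N}

instance (N : ℕ) : Finite (T σ N) := by
  have : Function.Injective (fun (a : T σ N) (i : σ) => (⟨a.1 i, by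
      have := Finsupp.le_degree i a.1
      have := a.2
      omega⟩ : Fin (N+1))) := by
    intro a b hab
    ext i
    simpa using congrFun hab i
  exact Finite.of_injective _ this

noncomputable instance (N : ℕ) : Fintype (T σ N) := Fintype.ofFinite _
noncomputable instance (N : ℕ) : DecidableEq (T σ N) := Classical.decEq _

noncomputable def Mat {R : Type} [CommRing R] (h : σ → MvPolynomial σ R) (d N : ℕ) : 
    Matrix (T σ N) (T σ N) R := fun a b => coeff b.1 (ev h d a.1)

theorem good_s (d : ℕ) (f : σ → MvPolynomial σ ℝ) (K : ℝ) : 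
    ∃ s > K, ∀ N, (Mat (fun i => X i ^ d + C s * f i) d N).det ≠ 0 := by
  classical
  let H : σ → MvPolynomial σ (Polynomial ℝ) := fun i =>
    X i ^ d + C Polynomial.X * MvPolynomial.map Polynomial.C (f i)
  have hH : ∀ s : ℝ, (fun i => MvPolynomial.map (Polynomial.evalRingHom s) (H i)) = 
      fun i => X i ^ d + C s * f i := by
    intro s
    funext i
    have : (Polynomial.evalRingHom s).comp Polynomial.C = RingHom.id ℝ := by
      ext; simp
    simp [H, MvPolynomial.map_map, this, MvPolynomial.map_id]
  have hdet : ∀ s N, Polynomial.eval s (Mat H d N).det = 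
      (Mat (fun i => X i ^ d + C s * f i) d N).det := by
    intro s N
    rw [← Polynomial.coe_evalRingHom, RingHom.map_det]
    congr 1
    ext a b
    simp only [RingHom.mapMatrix_apply, Matrix.map_apply, Mat]
    rw [← hH s, ← ev_map, coeff_map]
  have h0 : ∀ N, (Mat H d N).det ≠ 0 := by
    intro N h
    have := hdet 0 N
    rw [h] at this
    have h1 : Mat (fun i => X i ^ d + C (0:ℝ) * f i) d N = 1 := by
      ext a b
      simp only [map_zero, zero_mul, add_zero, Mat]
      rw [ev_X, coeff_monomial, Matrix.one_apply]
      simp [Subtype.ext_iff]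
    rw [h1] at this
    simp at this
  have hc : (⋃ N, {s : ℝ | (Mat H d N).det.IsRoot s}).Countable := by
    refine Set.countable_iUnion fun N => ?_
    exact (Polynomial.finite_setOfPred_isRoot (h0 N)).countable
  have : ¬ (Set.Ioi K ⊆ (⋃ N, {s : ℝ | (Mat H d N).det.IsRoot s})) := by
    intro hsub
    have h1 := (hc.mono hsub).le_aleph0
    rw [Cardinal.mk_Ioi_real] at h1
    exact absurd Cardinal.aleph0_lt_continuum (not_lt.mpr h1)
  obtain ⟨s, hs, hs'⟩ := Set.not_subset.mp this
  refine ⟨s, hs, fun N h => hs' ?_⟩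
  rw [← hdet] at h
  exact Set.mem_iUnion.mpr ⟨N, h⟩


theorem mon_surj (d : ℕ) (h : σ → MvPolynomial σ ℝ) (hh : ∀ i, (h i).IsHomogeneous d)
    (hdet : ∀ N, (Mat h d N).det ≠ 0) :
    ∃ Ψ : MvPolynomial σ ℝ ≃ₗ[ℝ] MvPolynomial σ ℝ, ∀ a, Ψ (monomial a 1) = ev h d a := by
  classical
  let Ψ : MvPolynomial σ ℝ →ₗ[ℝ] MvPolynomial σ ℝ := (basisMonomials σ ℝ).constr ℝ (ev h d)
  have hΨ : ∀ a, Ψ (monomial a 1) = ev h d a := fun a => by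
    have := (basisMonomials σ ℝ).constr_basis ℝ (ev h d) a
    simpa using this
  let g : ∀ N, T σ N → MvPolynomial σ ℝ := fun N a => ∑ b : T σ N, (Mat h d N)⁻¹ a b • monomial b.1 1
  let Φ : MvPolynomial σ ℝ →ₗ[ℝ] MvPolynomial σ ℝ :=
    (basisMonomials σ ℝ).constr ℝ (fun a => g a.degree ⟨a, rfl⟩)
  have hΦ : ∀ N (a : T σ N), Φ (monomial a.1 1) = g N a := by
    rintro N ⟨a, rfl⟩
    have := (basisMonomials σ ℝ).constr_basis ℝ (fun a => g a.degree ⟨a, rfl⟩) a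
    simpa using this
  have hev : ∀ N (a : T σ N), ev h d a.1 = ∑ b : T σ N, Mat h d N a b • monomial b.1 1 := by
    intro N a
    ext c
    simp only [coeff_sum, coeff_smul, coeff_monomial, smul_eq_mul, mul_ite, mul_one, mul_zero]
    by_cases hc : c.degree = N
    · rw [Finset.sum_eq_single ⟨c, hc⟩]
      · simp [Mat]
      · intro b _ hb
        rw [if_neg]
        intro h; exact hb (Subtype.ext h)
      · simp
    · rw [Finset.sum_eq_zero]
      · by_contra hne
        exact hc (by rw [← a.2]; exact (DFunLike.congr_fun Finsupp.degree_eq_weight_one c).trans (ev_hom hh a.1 hne))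
      · intro b _
        rw [if_neg]
        rintro rfl
        exact hc b.2
  have hu : ∀ N, IsUnit (Mat h d N).det := fun N => (hdet N).isUnit
  have h1 : Ψ ∘ₗ Φ = LinearMap.id := by
    refine (basisMonomials σ ℝ).ext fun a => ?_
    have : Φ (monomial a 1) = g _ ⟨a, rfl⟩ := hΦ _ ⟨a, rfl⟩
    simp only [coe_basisMonomials, LinearMap.comp_apply, this, LinearMap.id_apply, g, map_sum,
      map_smul, hΨ]
    simp only [hev, Finset.smul_sum, smul_smul]
    rw [Finset.sum_comm]
    simp only [← Finset.sum_smul, ← Matrix.mul_apply, Matrix.nonsing_inv_mul _ (hu _),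
      Matrix.one_apply, ite_smul, one_smul, zero_smul]
    simp
  have h2 : Φ ∘ₗ Ψ = LinearMap.id := by
    refine (basisMonomials σ ℝ).ext fun a => ?_
    have : ev h d a = _ := hev _ ⟨a, rfl⟩
    simp only [coe_basisMonomials, LinearMap.comp_apply, hΨ, this, LinearMap.id_apply, map_sum,
      map_smul, hΦ]
    simp only [g, Finset.smul_sum, smul_smul]
    rw [Finset.sum_comm]
    simp only [← Finset.sum_smul, ← Matrix.mul_apply, Matrix.mul_nonsing_inv _ (hu _),
      Matrix.one_apply, ite_smul, one_smul, zero_smul]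
    simp
  exact ⟨LinearEquiv.ofLinearMap Ψ Φ h1 h2, hΨ⟩

theorem exists_point (d : ℕ) (hd : Odd d) (h : σ → MvPolynomial σ ℝ)
    (hh : ∀ i, (h i).IsHomogeneous d)
    (hdet : ∀ N, (Mat h d N).det ≠ 0) (t : σ → ℝ) : 
    ∃ x : σ → ℝ, ∀ i, eval x (h i) = t i := by
  classical
  obtain ⟨Ψ, hΨ⟩ := mon_surj d h hh hdet
  have hd0 : 0 < d := hd.pos
  let rb : (σ →₀ ℕ) → (σ → Fin d) := fun a i => ⟨a i % d, Nat.mod_lt _ hd0⟩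
  let φ0 : MvPolynomial σ ℝ →ₗ[ℝ] ((σ → Fin d) → ℝ) := (basisMonomials σ ℝ).constr ℝ
    (fun a => (∏ i, t i ^ (a i / d)) • Pi.single (rb a) 1)
  have hφ0 : ∀ a, φ0 (monomial a 1) = (∏ i, t i ^ (a i / d)) • Pi.single (rb a) 1 := fun a => by
    have := (basisMonomials σ ℝ).constr_basis ℝ 
      (fun a => (∏ i, t i ^ (a i / d)) • (Pi.single (rb a) 1 : (σ → Fin d) → ℝ)) a
    simpa using this
  let φ : MvPolynomial σ ℝ →ₗ[ℝ] ((σ → Fin d) → ℝ) := φ0 ∘ₗ Ψ.symm.toLinearMap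
  have hφ : ∀ a, φ (ev h d a) = (∏ i, t i ^ (a i / d)) • Pi.single (rb a) 1 := fun a => by
    rw [← hφ0, ← hΨ]; simp [φ]
  let I : Ideal (MvPolynomial σ ℝ) := Ideal.span (Set.range fun i => h i - C (t i))
  -- induction principle
  have ind : ∀ {V : Type} [AddCommGroup V] [Module ℝ V] (F G : MvPolynomial σ ℝ →ₗ[ℝ] V),
      (∀ a, F (ev h d a) = G (ev h d a)) → F = G := by
    intro V _ _ F G hFG
    have : F ∘ₗ Ψ.toLinearMap = G ∘ₗ Ψ.toLinearMap := by
      refine (basisMonomials σ ℝ).ext fun a => ?_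
      simp [hΨ, hFG]
    refine LinearMap.ext fun p => ?_
    have := LinearMap.congr_fun this (Ψ.symm p)
    simpa using this
  let q : MvPolynomial σ ℝ →ₐ[ℝ] (MvPolynomial σ ℝ ⧸ I) := Ideal.Quotient.mkₐ ℝ I
  have hq : ∀ i, q (h i) = algebraMap ℝ _ (t i) := by
    intro i
    have : q (h i - C (t i)) = 0 := by
      rw [Ideal.Quotient.mkₐ_eq_mk, Ideal.Quotient.eq_zero_iff_mem]
      exact Ideal.subset_span ⟨i, rfl⟩
    rw [map_sub, sub_eq_zero] at this
    rw [this, ← MvPolynomial.algebraMap_eq, AlgHom.commutes]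
  let mb : (σ → Fin d) → MvPolynomial σ ℝ := fun b => 
    monomial (Finsupp.equivFunOnFinite.symm fun i => (b i : ℕ)) 1
  let ψ : ((σ → Fin d) → ℝ) →ₗ[ℝ] (MvPolynomial σ ℝ ⧸ I) := 
    Fintype.linearCombination ℝ (fun b => q (mb b))
  have hmb : ∀ a, mb (rb a) = monomial (red d a) 1 := by
    intro a
    have : (Finsupp.equivFunOnFinite.symm fun i => (rb a i : ℕ)) = red d a := by
      ext i; simp [red, rb]
    simp only [mb, this]
  have key1 : ψ ∘ₗ φ = q.toLinearMap := by
    refine ind _ _ fun a => ?_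
    rw [LinearMap.comp_apply, hφ, map_smul]
    have : ψ (Pi.single (rb a) 1) = q (mb (rb a)) := by
      simp only [ψ]
      rw [Fintype.linearCombination_apply_single, one_smul]
    rw [this, hmb, AlgHom.toLinearMap_apply, ev, map_mul, map_prod, mul_comm]
    simp only [map_pow, hq]
    simp only [← map_pow]
    rw [← map_prod]
    exact Algebra.smul_def (A := MvPolynomial σ ℝ ⧸ I) _ _
  have hev_mul : ∀ i a, h i * ev h d a = ev h d (a + Finsupp.single i d) := by
    intro i a
    have h1 : red d (a + Finsupp.single i d) = red d a := by
      ext j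
      by_cases hj : i = j
      · subst hj; simp [red]
      · simp [red, hj]
    have h2 : ∏ j, h j ^ ((a + Finsupp.single i d) j / d) = h i * ∏ j, h j ^ (a j / d) := by
      rw [← Finset.mul_prod_erase _ _ (Finset.mem_univ i),
        ← Finset.mul_prod_erase (a := i) _ (fun j => h j ^ (a j / d)) (Finset.mem_univ i), ← mul_assoc]
      congr 1
      · simp [Nat.add_div_right _ hd0, pow_succ, mul_comm]
      · refine Finset.prod_congr rfl fun j hj => ?_
        have : i ≠ j := (Finset.ne_of_mem_erase hj).symm
        simp [this]
    rw [ev, ev, h1, h2]; ring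
  have key2 : ∀ i, φ ∘ₗ LinearMap.mulLeft ℝ (h i) = t i • φ := by
    intro i
    refine ind _ _ fun a => ?_
    simp only [LinearMap.comp_apply, LinearMap.mulLeft_apply, LinearMap.smul_apply]
    rw [hev_mul, hφ, hφ, smul_smul]
    have h1 : rb (a + Finsupp.single i d) = rb a := by
      ext j
      by_cases hj : i = j
      · subst hj; simp [rb]
      · simp [rb, hj]
    have h2 : ∏ j, t j ^ ((a + Finsupp.single i d) j / d) = t i * ∏ j, t j ^ (a j / d) := by
      rw [← Finset.mul_prod_erase _ _ (Finset.mem_univ i),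
        ← Finset.mul_prod_erase (a := i) _ (fun j => t j ^ (a j / d)) (Finset.mem_univ i), ← mul_assoc]
      congr 1
      · simp [Nat.add_div_right _ hd0, pow_succ, mul_comm]
      · refine Finset.prod_congr rfl fun j hj => ?_
        have : i ≠ j := (Finset.ne_of_mem_erase hj).symm
        simp [this]
    rw [h1, h2]
  have key3 : ∀ p ∈ I, φ p = 0 := by
    intro p hp
    obtain ⟨c, rfl⟩ := (Submodule.mem_span_range_iff_exists_fun _).mp hp
    rw [map_sum]
    refine Finset.sum_eq_zero fun i _ => ?_
    have := LinearMap.congr_fun (key2 i) (c i)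
    simp only [LinearMap.comp_apply, LinearMap.mulLeft_apply, LinearMap.smul_apply] at this
    have h3 : c i • (h i - C (t i)) = h i * c i - t i • c i := by
      rw [smul_eq_mul, MvPolynomial.smul_eq_C_mul]; ring
    rw [h3, map_sub, this, map_smul, sub_self]
  have hker : I.restrictScalars ℝ = LinearMap.ker φ := by
    ext p
    rw [Submodule.restrictScalars_mem, LinearMap.mem_ker]
    refine ⟨key3 p, fun hp => ?_⟩
    have := LinearMap.congr_fun key1 p
    rw [LinearMap.comp_apply, hp, map_zero, AlgHom.toLinearMap_apply] at this
    exact Ideal.Quotient.eq_zero_iff_mem.mp this.symm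
  have hsurj : Function.Surjective φ := by
    rw [← LinearMap.range_eq_top, eq_top_iff, ← (Pi.basisFun ℝ (σ → Fin d)).span_eq,
      Submodule.span_le]
    rintro _ ⟨b, rfl⟩
    refine ⟨ev h d (Finsupp.equivFunOnFinite.symm fun i => (b i : ℕ)), ?_⟩
    rw [hφ]
    have h1 : rb (Finsupp.equivFunOnFinite.symm fun i => (b i : ℕ)) = b := by
      ext j; simp [rb, Nat.mod_eq_of_lt]
    rw [h1]
    simp [Nat.div_eq_of_lt]
  let e1 : (MvPolynomial σ ℝ ⧸ I) ≃ₗ[ℝ] (MvPolynomial σ ℝ ⧸ LinearMap.ker φ) :=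
    (Submodule.quotEquivOfEq (I.restrictScalars ℝ) _ hker)
  let e : (MvPolynomial σ ℝ ⧸ I) ≃ₗ[ℝ] ((σ → Fin d) → ℝ) := 
    e1.trans (φ.quotKerEquivOfSurjective hsurj)
  have hfin : Module.Finite ℝ (MvPolynomial σ ℝ ⧸ I) := Module.Finite.equiv e.symm
  obtain ⟨χ⟩ := odd_module_aux (A := MvPolynomial σ ℝ ⧸ I) _ (MvPolynomial σ ℝ ⧸ I) rfl (by
    rw [e.finrank_eq]
    simpa using hd.pow)
  refine ⟨fun i => χ (q (X i)), fun i => ?_⟩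
  have h1 : (χ.comp q) = aeval (fun i => χ (q (X i))) := by
    ext j; simp
  have h2 := AlgHom.congr_fun h1 (h i)
  rw [AlgHom.comp_apply, hq, AlgHom.commutes] at h2
  rw [← coe_aeval_eq_eval]
  exact h2.symm

end BU

namespace BU
open MvPolynomial

theorem eval_scale {σ : Type} [Fintype σ] {d : ℕ} {F : MvPolynomial σ ℝ} (hF : F.IsHomogeneous d)
    (c : ℝ) (y : σ → ℝ) : eval (fun i => c * y i) F = c ^ d * eval y F := by
  rw [eval_eq', eval_eq', Finset.mul_sum]
  refine Finset.sum_congr rfl fun e he => ?_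
  have h1 : e.degree = d :=
    (DFunLike.congr_fun Finsupp.degree_eq_weight_one e).trans (hF (mem_support_iff.mp he))
  simp only [mul_pow, Finset.prod_mul_distrib]
  rw [Finset.prod_pow_eq_pow_sum, ← Finsupp.degree_eq_sum, h1]
  ring

abbrev K (σ : Type) [Fintype σ] : Set (σ → ℝ) := {y | ∑ i, y i ^ 2 = 1}

theorem abs_le_one {σ : Type} [Fintype σ] (y : K σ) (i : σ) : |y.1 i| ≤ 1 := by
  have h1 : ∑ i, y.1 i ^ 2 = 1 := y.2
  have h2 : y.1 i ^ 2 ≤ ∑ i, y.1 i ^ 2 :=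
    Finset.single_le_sum (f := fun i => y.1 i ^ 2) (fun i _ => sq_nonneg _) (Finset.mem_univ i)
  exact (sq_le_one_iff_abs_le_one _).mp (by linarith)

theorem K_compact (σ : Type) [Fintype σ] : IsCompact (K σ) := by
  refine Metric.isCompact_of_isClosed_isBounded ?_ ?_
  · exact isClosed_eq (by fun_prop) continuous_const
  · refine (Metric.isBounded_closedBall (x := (0 : σ → ℝ)) (r := 1)).subset fun y hy => ?_
    rw [mem_closedBall_zero_iff, pi_norm_le_iff_of_nonneg zero_le_one]
    exact fun i => abs_le_one ⟨y, hy⟩ i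

instance {σ : Type} [Fintype σ] : CompactSpace (K σ) := isCompact_iff_compactSpace.mp (K_compact σ)

theorem neg_mem {σ : Type} [Fintype σ] (y : K σ) : -y.1 ∈ K σ := by
  have h : ∑ i, y.1 i ^ 2 = 1 := y.2
  change ∑ i, (-y.1 i) ^ 2 = 1
  simpa using h

theorem approx {σ : Type} [Fintype σ] (φ : C(K σ, ℝ))
    (hφ : ∀ y : K σ, φ ⟨-y.1, neg_mem y⟩ = - φ y) (ε : ℝ) (hε : 0 < ε) :
    ∃ D : ℕ, ∀ d ≥ D, Odd d → ∃ F : MvPolynomial σ ℝ, F.IsHomogeneous d ∧ 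
      ∀ y : K σ, |eval y.1 F - φ y| < ε := by
  let co : σ → C(K σ, ℝ) := fun i => ⟨fun y => y.1 i, (continuous_apply i).comp continuous_subtype_val⟩
  have hsep : (aeval co : MvPolynomial σ ℝ →ₐ[ℝ] C(K σ, ℝ)).range.SeparatesPoints := by
    intro x y hxy
    have : ∃ i, x.1 i ≠ y.1 i := by
      by_contra! h
      exact hxy (Subtype.ext (funext h))
    obtain ⟨i, hi⟩ := this
    exact ⟨co i, ⟨co i, ⟨X i, by simp⟩, rfl⟩, hi⟩
  obtain ⟨⟨_, p, rfl⟩, hp⟩ :=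
    ContinuousMap.exists_mem_subalgebra_near_continuous_of_separatesPoints _ hsep φ φ.continuous ε hε
  have hp' : ∀ y : K σ, |eval y.1 p - φ y| < ε := by
    intro y
    have h1 : (ContinuousMap.evalAlgHom ℝ ℝ y).comp (aeval co) = aeval y.1 := by
      ext i
      rw [AlgHom.comp_apply, aeval_X, aeval_X]
      rfl
    have h2 := AlgHom.congr_fun h1 p
    have h3 := hp y
    have h4 : (aeval co p) y = eval y.1 p := by
      rw [← coe_aeval_eq_eval]; exact h2
    rw [← h4]
    exact h3
  refine ⟨p.totalDegree, fun d hd hodd => ?_⟩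
  let Q : MvPolynomial σ ℝ := ∑ i, X i ^ 2
  have hQ : Q.IsHomogeneous 2 := IsHomogeneous.sum _ _ _ fun i _ => by
    simpa using (isHomogeneous_X ℝ i).pow 2
  let S := (Finset.range (p.totalDegree + 1)).filter (fun k => Odd k)
  refine ⟨∑ k ∈ S, homogeneousComponent k p * Q ^ ((d - k) / 2), ?_, fun y => ?_⟩
  · refine IsHomogeneous.sum _ _ _ fun k hk => ?_
    have hk' : k < p.totalDegree + 1 ∧ Odd k := by simpa [S] using hk
    have h1 := (homogeneousComponent_isHomogeneous k p).mul (hQ.pow ((d - k) / 2))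
    have h2 : k + 2 * ((d - k) / 2) = d := by
      obtain ⟨a, ha⟩ := hodd
      obtain ⟨b, hb⟩ := hk'.2
      omega
    rwa [h2] at h1
  · have hy : eval y.1 Q = 1 := by
      have h : ∑ i, y.1 i ^ 2 = 1 := y.2
      simpa [Q] using h
    rw [map_sum]
    simp only [map_mul, map_pow, hy, one_pow, mul_one]
    have e1 : eval y.1 p = ∑ k ∈ Finset.range (p.totalDegree + 1), 
        eval y.1 (homogeneousComponent k p) := by
      conv_lhs => rw [← sum_homogeneousComponent p]
      rw [map_sum]
    have e2 : eval (-y.1) p = ∑ k ∈ Finset.range (p.totalDegree + 1), 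
        (-1) ^ k * eval y.1 (homogeneousComponent k p) := by
      conv_lhs => rw [← sum_homogeneousComponent p]
      rw [map_sum]
      refine Finset.sum_congr rfl fun k _ => ?_
      rw [← eval_scale (homogeneousComponent_isHomogeneous k p)]
      congr 2
      funext i; simp
    have e3 : eval y.1 p - eval (-y.1) p = 2 * ∑ k ∈ S, eval y.1 (homogeneousComponent k p) := by
      rw [e1, e2, ← Finset.sum_sub_distrib, Finset.mul_sum, Finset.sum_filter]
      refine Finset.sum_congr rfl fun k _ => ?_
      split_ifs with hk
      · rw [hk.neg_one_pow]; ring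
      · rw [(Nat.not_odd_iff_even.mp hk).neg_one_pow]; ring
    have a1 := abs_lt.mp (hp' y)
    have a2 := abs_lt.mp (hp' ⟨-y.1, neg_mem y⟩)
    rw [hφ y] at a2
    simp only at a2
    rw [abs_lt]
    constructor <;> linarith [a1.1, a1.2, a2.1, a2.2]

theorem borsuk_ulam (m : ℕ) (g : Fin m → C(K (Option (Fin m)), ℝ))
    (hg : ∀ i, ∀ y : K (Option (Fin m)), g i ⟨-y.1, neg_mem y⟩ = - g i y) :
    ∃ y, ∀ i, g i y = 0 := by
  classical
  have happ : ∀ ε > 0, ∃ y, ∀ i, |g i y| < ε := by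
    intro ε hε
    choose D hD using fun i => approx (g i) (hg i) (ε / 2) (by positivity)
    let d := 2 * (∑ i, D i) + 1
    have hd : Odd d := ⟨_, rfl⟩
    have hdD : ∀ i, D i ≤ d := fun i => by
      have := Finset.single_le_sum (f := D) (fun i _ => Nat.zero_le _) (Finset.mem_univ i)
      omega
    choose F hF hFg using fun i => hD i d (hdD i) hd
    let f : Option (Fin m) → MvPolynomial (Option (Fin m)) ℝ := fun o => o.elim 0 F
    have hf : ∀ o, (f o).IsHomogeneous d := by
      rintro (_ | i)
      · exact isHomogeneous_zero _ _ _
      · exact hF i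
    obtain ⟨s, hs, hdet⟩ := good_s d f (2 / ε)
    have hs0 : 0 < s := lt_trans (by positivity) hs
    obtain ⟨x, hx⟩ := exists_point d hd (fun i => X i ^ d + C s * f i) (fun i => by
      refine IsHomogeneous.add ?_ ?_
      · simpa using (isHomogeneous_X ℝ i).pow d
      · simpa using (isHomogeneous_C _ s).mul (hf i)) hdet (fun o => o.elim 1 (fun _ => 0))
    simp only [map_add, map_mul, map_pow, eval_X, eval_C] at hx
    have hx0 : x none ^ d = 1 := by simpa [f] using hx none
    have hxi : ∀ i, x (some i) ^ d + s * eval x (F i) = 0 := fun i => by simpa [f] using hx (some i)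
    have hpos : 0 < ∑ o, x o ^ 2 := by
      refine Finset.sum_pos' (fun _ _ => sq_nonneg _) ⟨none, Finset.mem_univ _, ?_⟩
      have : x none ≠ 0 := by
        intro h
        rw [h, zero_pow (by omega)] at hx0
        exact zero_ne_one hx0
      positivity
    let r := (Real.sqrt (∑ o, x o ^ 2))⁻¹
    have hr : r ^ 2 * ∑ o, x o ^ 2 = 1 := by
      simp only [r, inv_pow]
      rw [Real.sq_sqrt hpos.le, inv_mul_cancel₀ hpos.ne']
    let y : K (Option (Fin m)) := ⟨fun o => r * x o, by
      simp only [K, Set.mem_ofPred_eq, mul_pow, ← Finset.mul_sum, hr]⟩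
    refine ⟨y, fun i => ?_⟩
    have h1 : y.1 (some i) ^ d + s * eval y.1 (F i) = 0 := by
      have : eval y.1 (F i) = r ^ d * eval x (F i) := eval_scale (hF i) r x
      rw [this]
      have h2 : y.1 (some i) = r * x (some i) := rfl
      rw [h2, mul_pow]
      linear_combination r ^ d * hxi i
    have h2 : |y.1 (some i) ^ d| ≤ 1 := by
      rw [abs_pow]
      exact pow_le_one₀ (abs_nonneg _) (abs_le_one y _)
    have h3 : s * |eval y.1 (F i)| ≤ 1 := by
      rw [show s * |eval y.1 (F i)| = |s * eval y.1 (F i)| by rw [abs_mul, abs_of_pos hs0]]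
      have : s * eval y.1 (F i) = - y.1 (some i) ^ d := by linarith
      rw [this, abs_neg]; exact h2
    have h4 : |eval y.1 (F i)| < ε / 2 := by
      by_contra! h
      have h5 : 2 / ε * (ε / 2) = 1 := by field_simp
      have : 2 / ε * (ε / 2) < s * |eval y.1 (F i)| := by
        calc 2 / ε * (ε / 2) < s * (ε / 2) := by gcongr
          _ ≤ _ := by gcongr
      linarith
    have h6 := hFg i y
    rw [abs_lt] at *
    constructor <;> linarith [h4.1, h4.2, h6.1, h6.2]
  have hne : Nonempty (K (Option (Fin m))) := (happ 1 one_pos).nonempty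
  obtain ⟨y, -, hy⟩ := (isCompact_univ (X := K (Option (Fin m)))).exists_isMinOn 
    Set.univ_nonempty (f := fun y => ∑ i, |g i y|) (by fun_prop)
  refine ⟨y, ?_⟩
  have hle : ∑ i, |g i y| ≤ 0 := by
    refine le_of_forall_pos_le_add fun ε hε => ?_
    obtain ⟨z, hz⟩ := happ (ε / (m + 1)) (by positivity)
    have h1 : ∑ i, |g i y| ≤ ∑ i, |g i z| := hy (Set.mem_univ z)
    have h2 : ∑ i, |g i z| ≤ ∑ i : Fin m, ε / (m + 1) := Finset.sum_le_sum fun i _ => (hz i).le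
    have h3 : ∑ i : Fin m, ε / (m + 1 : ℝ) ≤ ε := by
      rw [Finset.sum_const, Finset.card_univ, Fintype.card_fin, nsmul_eq_mul]
      rw [mul_div_assoc', div_le_iff₀ (by positivity)]
      nlinarith
    linarith
  intro i
  have h1 := (Finset.sum_eq_zero_iff_of_nonneg (fun i _ => abs_nonneg (g i y))).mp
    (le_antisymm hle (Finset.sum_nonneg fun i _ => abs_nonneg _)) i (Finset.mem_univ i)
  exact abs_eq_zero.mp h1

/-- one pair -/
theorem one_pair {m n : ℕ} 
    (f : Metric.sphere (0 : EuclideanSpace ℝ (Fin n)) 1 → EuclideanSpace ℝ (Fin m))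
    (hf : Continuous f) (w : Option (Option (Fin m)) → EuclideanSpace ℝ (Fin n))
    (hw : Orthonormal ℝ w) :
    ∃ v₁ v₂ : Metric.sphere (0 : EuclideanSpace ℝ (Fin n)) 1,
      ⟪(v₁ : EuclideanSpace ℝ (Fin n)), (v₂ : EuclideanSpace ℝ (Fin n))⟫ = 0 ∧ f v₁ = f v₂ ∧
      v₁.1 ∈ Submodule.span ℝ (Set.range w) ∧ v₂.1 ∈ Submodule.span ℝ (Set.range w) := by
  let c : ℝ := (Real.sqrt 2)⁻¹
  have hc : c * c = 1 / 2 := by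
    simp only [c]
    rw [← mul_inv, Real.mul_self_sqrt (by norm_num)]; norm_num
  let b : (Option (Fin m) → ℝ) → EuclideanSpace ℝ (Fin n) := fun y => ∑ o, y o • w (some o)
  have hb : Continuous b := by fun_prop
  have hbn : ∀ y, b (-y) = - b y := by intro y; simp only [b, Pi.neg_apply, neg_smul, Finset.sum_neg_distrib]
  have haa : ⟪w none, w none⟫ = 1 := by
    rw [real_inner_self_eq_norm_sq, hw.1, one_pow]
  have hab : ∀ y, ⟪w none, b y⟫ = 0 := by
    intro y
    simp only [b, inner_sum, inner_smul_right]
    refine Finset.sum_eq_zero fun o _ => ?_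
    rw [hw.2 (by simp), mul_zero]
  have hw' : Orthonormal ℝ (fun o => w (some o)) := hw.comp _ (Option.some_injective _)
  have hbb : ∀ y ∈ K (Option (Fin m)), ⟪b y, b y⟫ = 1 := by
    intro y hy
    have := hw'.inner_sum y y Finset.univ
    simp only [b]
    rw [this]
    have h2 : ∑ i, y i ^ 2 = 1 := hy
    rw [← h2]
    refine Finset.sum_congr rfl fun i _ => ?_
    simp [sq]
  let u : (Option (Fin m) → ℝ) → EuclideanSpace ℝ (Fin n) := fun y => c • (w none + b y)
  have hu : Continuous u := by fun_prop
  have hus : ∀ y : K (Option (Fin m)), u y.1 ∈ Metric.sphere (0 : EuclideanSpace ℝ (Fin n)) 1 := by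
    intro y
    rw [mem_sphere_zero_iff_norm]
    have : ‖u y.1‖ ^ 2 = 1 := by
      rw [← real_inner_self_eq_norm_sq]
      simp only [u, inner_smul_left, inner_smul_right, inner_add_left, inner_add_right, haa, hab,
        hbb _ y.2, real_inner_comm (w none) (b y.1), conj_trivial]
      linear_combination 2 * hc
    exact (pow_eq_one_iff_of_nonneg (norm_nonneg _) two_ne_zero).mp this
  let U : K (Option (Fin m)) → Metric.sphere (0 : EuclideanSpace ℝ (Fin n)) 1 := 
    fun y => ⟨u y.1, hus y⟩
  have hU : Continuous U := by fun_prop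
  let N : K (Option (Fin m)) → K (Option (Fin m)) := fun y => ⟨-y.1, neg_mem y⟩
  have hN : Continuous N := by fun_prop
  obtain ⟨y, hy⟩ := borsuk_ulam m (fun i => ⟨fun y => f (U y) i - f (U (N y)) i, by fun_prop⟩) (by
    intro i y
    have : N (N y) = y := Subtype.ext (neg_neg _)
    change f (U (N y)) i - f (U (N (N y))) i = -(f (U y) i - f (U (N y)) i)
    rw [this]; ring)
  have hmem : ∀ y, u y ∈ Submodule.span ℝ (Set.range w) := fun y => by
    refine Submodule.smul_mem _ _ (Submodule.add_mem _ (Submodule.subset_span ⟨_, rfl⟩) ?_)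
    exact Submodule.sum_mem _ fun o _ => Submodule.smul_mem _ _ (Submodule.subset_span ⟨_, rfl⟩)
  refine ⟨U y, U (N y), ?_, ?_, hmem _, hmem _⟩
  · change ⟪u y.1, u (-y.1)⟫ = 0
    simp only [u, hbn, inner_smul_left, inner_smul_right, inner_add_left, inner_add_right, 
      inner_neg_right, haa, hab, hbb _ y.2, real_inner_comm (w none) (b y.1), conj_trivial]
    ring
  · ext i
    have := hy i
    simp only [ContinuousMap.coe_mk] at this
    linarith

end BU

theorem flip_stiefel_sphere_two_pairs (n : ℕ) (hn : 4 ≤ n)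
    (f : Metric.sphere (0 : EuclideanSpace ℝ (Fin n)) 1 → EuclideanSpace ℝ (Fin (n / 2 - 2)))
    (hf : Continuous f) :
    ∃ v₁ v₂ v₃ v₄ : Metric.sphere (0 : EuclideanSpace ℝ (Fin n)) 1,
      ⟪(v₁ : EuclideanSpace ℝ (Fin n)), (v₂ : EuclideanSpace ℝ (Fin n))⟫ = 0 ∧
      ⟪(v₁ : EuclideanSpace ℝ (Fin n)), (v₃ : EuclideanSpace ℝ (Fin n))⟫ = 0 ∧
      ⟪(v₁ : EuclideanSpace ℝ (Fin n)), (v₄ : EuclideanSpace ℝ (Fin n))⟫ = 0 ∧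
      ⟪(v₂ : EuclideanSpace ℝ (Fin n)), (v₃ : EuclideanSpace ℝ (Fin n))⟫ = 0 ∧
      ⟪(v₂ : EuclideanSpace ℝ (Fin n)), (v₄ : EuclideanSpace ℝ (Fin n))⟫ = 0 ∧
      ⟪(v₃ : EuclideanSpace ℝ (Fin n)), (v₄ : EuclideanSpace ℝ (Fin n))⟫ = 0 ∧
      f v₁ = f v₂ ∧ f v₃ = f v₄ := by
  have hcard : Fintype.card (Option (Option (Fin (n / 2 - 2))) ⊕ Option (Option (Fin (n / 2 - 2)))) 
      ≤ Fintype.card (Fin n) := by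
    simp only [Fintype.card_sum, Fintype.card_option, Fintype.card_fin]
    omega
  obtain ⟨ι⟩ := Function.Embedding.nonempty_of_card_le hcard
  let E := EuclideanSpace.basisFun (Fin n) ℝ
  have hE : Orthonormal ℝ E := E.orthonormal
  have h1 : Orthonormal ℝ (fun o => E (ι (Sum.inl o))) := 
    hE.comp _ (ι.injective.comp Sum.inl_injective)
  have h2 : Orthonormal ℝ (fun o => E (ι (Sum.inr o))) := 
    hE.comp _ (ι.injective.comp Sum.inr_injective)
  obtain ⟨v₁, v₂, h12, hf12, hv1, hv2⟩ := BU.one_pair f hf _ h1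
  obtain ⟨v₃, v₄, h34, hf34, hv3, hv4⟩ := BU.one_pair f hf _ h2
  have hort : Submodule.span ℝ (Set.range (fun o => E (ι (Sum.inl o)))) ⟂ 
      Submodule.span ℝ (Set.range (fun o => E (ι (Sum.inr o)))) := by
    rw [Submodule.isOrtho_span]
    rintro _ ⟨a, rfl⟩ _ ⟨b, rfl⟩
    exact hE.2 (fun h => by simpa using ι.injective h)
  rw [Submodule.isOrtho_iff_inner_eq] at hort
  exact ⟨v₁, v₂, v₃, v₄, h12, hort _ hv1 _ hv3, hort _ hv1 _ hv4, hort _ hv2 _ hv3,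
    hort _ hv2 _ hv4, h34, hf12, hf34⟩
end

section
/- For every integer n ≥ 6 and every continuous map f : S^{n-1} → ℝ^{⌊(n - r_n - 1)/3⌋}, there exist pairwise orthogonal vectors v_1, v_2, v_3, v_4, v_5, v_6 ∈ S^{n-1} such that f(v_1) = f(v_2), f(v_3) = f(v_4), and f(v_5) = f(v_6), where r_n = 5 if n ≡ 1 or 2 (mod 4), r_n = 4 if n ≡ 0 (mod 4), and r_n = 3 if n ≡ 3 (mod 4). -/
open scoped RealInnerProductSpace

/-- `r_n = 5` if `n ≡ 1, 2 (mod 4)`, `4` if `n ≡ 0 (mod 4)`, `3` if `n ≡ 3 (mod 4)`. -/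
def flipStiefelR (n : ℕ) : ℕ :=
  if n % 4 = 0 then 4 else if n % 4 = 3 then 3 else 5
section FlipAux
open Set MeasureTheory Metric Filter Topology
variable {E : Type*} [NormedAddCommGroup E] [InnerProductSpace ℝ E] [FiniteDimensional ℝ E]

lemma aux_det_poly (A : E →L[ℝ] E) : ∃ P : Polynomial ℝ, P.natDegree ≤ Module.finrank ℝ E ∧
    ∀ t : ℝ, P.eval t = (ContinuousLinearMap.id ℝ E + t • A).det := by
  classical
  let b := Module.finBasis ℝ E
  let M := LinearMap.toMatrix b b (A : E →ₗ[ℝ] E)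
  refine ⟨((Polynomial.X : Polynomial ℝ) • M.map Polynomial.C + (1 : Matrix (Fin (Module.finrank ℝ E)) (Fin (Module.finrank ℝ E)) ℝ).map Polynomial.C).det, ?_, ?_⟩
  · simpa using Polynomial.natDegree_det_X_add_C_le M 1
  · intro t
    have h1 : (ContinuousLinearMap.id ℝ E + t • A).det
        = (1 + t • M).det := by
      rw [ContinuousLinearMap.det, ← LinearMap.det_toMatrix b]
      congr 1
      simp [M]
    rw [h1, ← Polynomial.coe_evalRingHom, RingHom.map_det]
    congr 1
    ext i j
    by_cases h : i = j
    · subst h; simp [Matrix.add_apply, Matrix.smul_apply, add_comm]; ring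
    · simp [Matrix.add_apply, Matrix.smul_apply, h]; ring

lemma aux_det_ne (A : E →L[ℝ] E) (hA : ‖A‖ < 1) : (ContinuousLinearMap.id ℝ E + A).det ≠ 0 := by
  intro h
  have := LinearMap.bot_lt_ker_of_det_eq_zero h
  obtain ⟨v, hv, hv0⟩ := (Submodule.ne_bot_iff _).1 this.ne'
  have hv' : v + A v = 0 := by simpa using hv
  have h2 : ‖v‖ = ‖A v‖ := by
    rw [← norm_neg (A v), ← eq_neg_of_add_eq_zero_left hv']
  have h3 := A.le_opNorm v
  have : 0 < ‖v‖ := norm_pos_iff.2 hv0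
  nlinarith

lemma aux_det_pos (A : E →L[ℝ] E) (hA : ‖A‖ < 1) : 0 < (ContinuousLinearMap.id ℝ E + A).det := by
  obtain ⟨P, -, hP⟩ := aux_det_poly A
  by_contra! h
  have hc : ContinuousOn (fun t : ℝ => P.eval t) (Icc 0 1) := P.continuous.continuousOn
  have h0 : P.eval 0 = 1 := by rw [hP]; simp [ContinuousLinearMap.det]
  have h1 : P.eval 1 ≤ 0 := by rw [hP]; simpa using h
  obtain ⟨t, ht, ht0⟩ := intermediate_value_Icc' (zero_le_one) hc
    (show (0 : ℝ) ∈ Icc (P.eval 1) (P.eval 0) from ⟨h1, by rw [h0]; exact zero_le_one⟩)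
  refine aux_det_ne (t • A) ?_ ((hP t).symm.trans ht0)
  rw [norm_smul, Real.norm_eq_abs, abs_of_nonneg ht.1]
  calc t * ‖A‖ ≤ 1 * ‖A‖ := by gcongr; exact ht.2
    _ < 1 := by simpa using hA

variable [MeasurableSpace E] [BorelSpace E]

lemma aux_vol_small (D : E → E) (hD : ContDiff ℝ 1 D) (R : ℝ)
    (h0 : ∀ x, ‖x‖ = R → D x = 0) : ∃ t₀ > 0, ∀ t : ℝ, 0 < t → t < t₀ →
    ∫ x in closedBall (0 : E) R, (ContinuousLinearMap.id ℝ E + t • fderiv ℝ D x).det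
      = volume.real (closedBall (0 : E) R) := by
  classical
  have hcf : Continuous (fderiv ℝ D) := hD.continuous_fderiv (by norm_num)
  obtain ⟨K0, hK0⟩ := (isCompact_closedBall (0 : E) R).exists_bound_of_continuousOn
    hcf.continuousOn
  let K : NNReal := Real.toNNReal K0
  have hK : ∀ x ∈ closedBall (0 : E) R, ‖fderiv ℝ D x‖₊ ≤ K := fun x hx => by
    rw [← NNReal.coe_le_coe]; exact (hK0 x hx).trans (Real.le_coe_toNNReal K0)
  have hLip : LipschitzOnWith K D (closedBall (0 : E) R) :=
    Convex.lipschitzOnWith_of_nnnorm_fderiv_le (𝕜 := ℝ)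
      (fun x _ => (hD.differentiable (by norm_num)).differentiableAt) hK (convex_closedBall _ _)
  let g : E → E := fun x => if ‖x‖ ≤ R then D x else 0
  have hcross : ∀ x y : E, ‖x‖ ≤ R → R < ‖y‖ → ‖D x‖ ≤ K * ‖x - y‖ := by
    intro x y hx hy
    have hc : ContinuousOn (fun s : ℝ => ‖x + s • (y - x)‖) (Icc 0 1) := by fun_prop
    obtain ⟨s, hs, hs0⟩ := intermediate_value_Icc (zero_le_one) hc
      (show R ∈ Icc _ _ from ⟨by simpa using hx, by simpa using hy.le⟩)
    have h1 := hLip.dist_le_mul x (by simpa using hx) (x + s • (y - x)) (by simpa using hs0.le)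
    rw [h0 _ hs0, dist_zero_right, dist_eq_norm] at h1
    refine h1.trans ?_
    gcongr
    have : x - (x + s • (y - x)) = s • (x - y) := by module
    rw [this, norm_smul, Real.norm_eq_abs, abs_of_nonneg hs.1]
    nlinarith [hs.2, norm_nonneg (x - y)]
  have hg : ∀ x y, ‖g x - g y‖ ≤ K * ‖x - y‖ := by
    intro x y
    simp only [g]
    split_ifs with hx hy hy
    · simpa [dist_eq_norm] using hLip.dist_le_mul x (by simpa using hx) y (by simpa using hy)
    · simpa using hcross x y hx (not_le.1 hy)
    · rw [norm_sub_rev x y]; simpa using hcross y x hy (not_le.1 hx)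
    · simp; positivity
  refine ⟨1 / (K + 1), by positivity, fun t ht htt => ?_⟩
  have htK : t * K < 1 := by
    rw [lt_div_iff₀ (by positivity)] at htt
    nlinarith
  let G : E → E := fun x => x + t • g x
  have hinj : Function.Injective G := by
    intro x y hxy
    have h1 : x - y = t • (g y - g x) := by
      have : x + t • g x = y + t • g y := hxy
      rw [smul_sub, sub_eq_sub_iff_add_eq_add, this, add_comm]
    have h2 : ‖x - y‖ ≤ t * (K * ‖x - y‖) := by
      nth_rw 1 [h1]
      rw [norm_smul, Real.norm_eq_abs, abs_of_pos ht, norm_sub_rev]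
      gcongr
      exact hg x y
    have : ‖x - y‖ = 0 := by
      have := norm_nonneg (x - y)
      nlinarith
    exact sub_eq_zero.1 (norm_eq_zero.1 this)
  have hsurj : Function.Surjective G := by
    intro y
    have hcon : ContractingWith (Real.toNNReal t * K) (fun x => y - t • g x) := by
      refine ⟨?_, LipschitzWith.of_dist_le_mul fun a b => ?_⟩
      · rw [← NNReal.coe_lt_coe]; simpa [ht.le] using htK
      · rw [dist_eq_norm, dist_eq_norm]
        have : y - t • g a - (y - t • g b) = t • (g b - g a) := by module
        rw [this, norm_smul, Real.norm_eq_abs, abs_of_pos ht, norm_sub_rev]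
        simp only [NNReal.coe_mul, Real.coe_toNNReal _ ht.le, mul_assoc]
        gcongr
        exact hg a b
    refine ⟨ContractingWith.fixedPoint _ hcon, ?_⟩
    have := hcon.fixedPoint_isFixedPt
    have h2 : y - t • g (ContractingWith.fixedPoint _ hcon) = ContractingWith.fixedPoint _ hcon := this
    exact (sub_eq_iff_eq_add.1 h2).symm
  have hout : ∀ x, R < ‖x‖ → G x = x := fun x hx => by simp [G, g, not_le.2 hx]
  have himg : G '' closedBall 0 R = closedBall 0 R := by
    ext y
    constructor
    · rintro ⟨x, hx, rfl⟩
      by_contra hc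
      have hc' : R < ‖G x‖ := by simpa using hc
      have := hinj (hout _ hc')
      rw [this] at hc'
      exact absurd hx (by simpa using hc')
    · intro hy
      obtain ⟨x, rfl⟩ := hsurj y
      refine ⟨x, ?_, rfl⟩
      by_contra hc
      have hc' : R < ‖x‖ := by simpa using hc
      rw [hout x hc'] at hy
      exact hc hy
  have hder : ∀ x ∈ closedBall (0 : E) R, HasFDerivWithinAt G
      (ContinuousLinearMap.id ℝ E + t • fderiv ℝ D x) (closedBall 0 R) x := by
    intro x hx
    have h1 : HasFDerivAt (fun x => x + t • D x)
      (ContinuousLinearMap.id ℝ E + t • fderiv ℝ D x) x :=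
      (hasFDerivAt_id x).add
        (((hD.differentiable (by norm_num)).differentiableAt.hasFDerivAt).const_smul t)
    refine h1.hasFDerivWithinAt.congr (fun y hy => ?_) ?_
    · have : ‖y‖ ≤ R := by simpa using hy
      simp [G, g, this]
    · have : ‖x‖ ≤ R := by simpa using hx
      simp [G, g, this]
  have key := integral_image_eq_integral_abs_det_fderiv_smul (volume : Measure E)
    (measurableSet_closedBall) hder hinj.injOn (fun _ => (1 : ℝ))
  rw [himg] at key
  simp only [smul_eq_mul, mul_one, integral_const, MeasurableSet.univ, measureReal_restrict_apply,
    univ_inter] at key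
  rw [key]
  refine setIntegral_congr_fun measurableSet_closedBall fun x hx => ?_
  refine (abs_of_pos (aux_det_pos _ ?_)).symm
  rw [norm_smul, Real.norm_eq_abs, abs_of_pos ht]
  have : ‖fderiv ℝ D x‖ ≤ K := by exact_mod_cast hK x hx
  calc t * ‖fderiv ℝ D x‖ ≤ t * K := by gcongr
    _ < 1 := htK

lemma aux_no_retraction (r : E → E) (hr : ContDiff ℝ 1 r) (R : ℝ) (hR : 0 < R)
    (h0 : ∀ x, ‖x‖ = R → r x = x) (h1 : ∀ x, ‖r x‖ = R) : False := by
  classical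
  let D : E → E := fun x => r x - x
  have hD : ContDiff ℝ 1 D := hr.sub contDiff_id
  obtain ⟨t₀, ht₀, ht⟩ := aux_vol_small D hD R (fun x hx => by simp [D, h0 x hx])
  have hcf : Continuous (fderiv ℝ D) := hD.continuous_fderiv (by norm_num)
  have hdet0 : ∀ x, (ContinuousLinearMap.id ℝ E + (1 : ℝ) • fderiv ℝ D x).det = 0 := by
    intro x
    have hrd : DifferentiableAt ℝ r x := (hr.differentiable (by norm_num)).differentiableAt
    have e1 : ContinuousLinearMap.id ℝ E + (1 : ℝ) • fderiv ℝ D x = fderiv ℝ r x := by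
      have : fderiv ℝ D x = fderiv ℝ r x - ContinuousLinearMap.id ℝ E := by
        simp only [D]
        rw [fderiv_fun_sub hrd differentiableAt_fun_id]
        simp
      rw [this]; simp
    rw [e1]
    by_contra hne
    have hu : IsUnit (LinearMap.det (fderiv ℝ r x : E →ₗ[ℝ] E)) := isUnit_iff_ne_zero.2 hne
    rw [← LinearMap.isUnit_iff_isUnit_det, Module.End.isUnit_iff] at hu
    obtain ⟨v, hv⟩ := hu.2 (r x)
    have hv' : fderiv ℝ r x v = r x := hv
    have hconst : (fun y => ⟪r y, r y⟫) = fun _ => R ^ 2 := by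
      ext y; rw [real_inner_self_eq_norm_sq, h1]
    have hd := fderiv_inner_apply ℝ hrd hrd v
    rw [hconst, hv'] at hd
    simp [h1] at hd
    nlinarith
  let N := Module.finrank ℝ E + 1
  let v : ℕ → ℝ := fun i => t₀ / (i + 2)
  have hvpos : ∀ i, 0 < v i := fun i => by positivity
  have hvlt : ∀ i, v i < t₀ := fun i => by
    rw [div_lt_iff₀ (by positivity)]
    have : (0 : ℝ) ≤ i := by positivity
    nlinarith
  have hvinj : Set.InjOn v (Finset.range N : Set ℕ) := by
    intro i _ j _ hij
    simp only [v] at hij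
    field_simp at hij
    have : (i : ℝ) = j := by linarith
    exact_mod_cast this
  let L : ℕ → ℝ := fun i => (Lagrange.basis (Finset.range N) v i).eval 1
  have hL : ∑ i ∈ Finset.range N, L i = 1 := by
    have := congrArg (Polynomial.eval 1) (Lagrange.sum_basis hvinj ⟨0, by simp [N]⟩)
    simpa [Polynomial.eval_finsetSum] using this
  have hdetL : ∀ x, ∑ i ∈ Finset.range N,
      L i * (ContinuousLinearMap.id ℝ E + v i • fderiv ℝ D x).det = 0 := by
    intro x
    obtain ⟨P, hPd, hP⟩ := aux_det_poly (fderiv ℝ D x)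
    have hdeg : P.degree < ((Finset.range N).card : WithBot ℕ) := by
      rw [Finset.card_range]
      refine lt_of_le_of_lt Polynomial.degree_le_natDegree ?_
      exact_mod_cast Nat.lt_succ_of_le hPd
    have e := congrArg (Polynomial.eval 1) (Lagrange.eq_interpolate hvinj hdeg)
    rw [hP 1, hdet0, Lagrange.interpolate_apply, Polynomial.eval_finsetSum] at e
    rw [e]
    refine Finset.sum_congr rfl fun i _ => ?_
    simp [L, hP, mul_comm]
  have hint : ∀ i, IntegrableOn (fun x => L i * (ContinuousLinearMap.id ℝ E + v i • fderiv ℝ D x).det)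
      (closedBall (0 : E) R) volume := fun i => by
    refine ContinuousOn.integrableOn_compact (isCompact_closedBall 0 R) (Continuous.continuousOn ?_)
    have hcs : Continuous fun x => v i • fderiv ℝ D x := Continuous.const_smul hcf (v i)
    exact continuous_const.mul (ContinuousLinearMap.continuous_det.comp
      (continuous_const.add hcs))
  have h2 : ∑ i ∈ Finset.range N, ∫ x in closedBall (0 : E) R,
      L i * (ContinuousLinearMap.id ℝ E + v i • fderiv ℝ D x).det = 0 := by
    rw [← integral_finsetSum _ (fun i _ => hint i)]
    simp [hdetL]
  have h3 : volume.real (closedBall (0 : E) R) = 0 := by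
    rw [← h2, ← one_mul (volume.real _), ← hL, Finset.sum_mul]
    refine Finset.sum_congr rfl fun i _ => ?_
    rw [integral_const_mul, ht _ (hvpos i) (hvlt i)]
  have h4 : 0 < volume.real (closedBall (0 : E) R) :=
    ENNReal.toReal_pos (measure_closedBall_pos _ _ hR).ne' measure_closedBall_lt_top.ne
  exact h4.ne' h3

end FlipAux

section FlipAux2
open Set Metric Filter Topology
open scoped Manifold ContDiff
variable {E : Type*} [NormedAddCommGroup E] [InnerProductSpace ℝ E] [FiniteDimensional ℝ E]

lemma aux_brouwer (F : E → E) (hF : Continuous F) (hF0 : ∀ x, F x ≠ 0)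
    (h : ∀ x, 1 ≤ ‖x‖ → 0 < ⟪x, F x⟫) : False := by
  let t : E → Set E := fun x => {w | 0 < ⟪w, F x⟫ ∧ (2 ≤ ‖x‖ → w = x)}
  have htc : ∀ x, Convex ℝ (t x) := by
    intro x w hw z hz a b ha hb hab
    refine ⟨?_, fun hx => ?_⟩
    · rw [inner_add_left, real_inner_smul_left, real_inner_smul_left]
      have h1 := hw.1
      have h2 := hz.1
      rcases ha.eq_or_lt with rfl | ha'
      · have : b = 1 := by linarith
        subst this; simpa using h2
      · have := mul_pos ha' h1
        have := mul_nonneg hb h2.le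
        linarith
    · rw [hw.2 hx, hz.2 hx, ← add_smul, hab, one_smul]
  obtain ⟨G, hG⟩ := exists_contMDiffMap_forall_mem_convex_of_local (n := 1) 𝓘(ℝ, E) htc (by
    intro x
    by_cases hx : 1 < ‖x‖
    · refine ⟨{y | 1 < ‖y‖}, (isOpen_lt continuous_const continuous_norm).mem_nhds hx, id,
        contMDiffOn_id, fun y hy => ⟨h y (le_of_lt hy), fun _ => rfl⟩⟩
    · refine ⟨{y | 0 < ⟪F x, F y⟫} ∩ {y | ‖y‖ < 2}, inter_mem ?_ ?_, fun _ => F x,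
        contMDiffOn_const, fun y hy => ⟨hy.1, fun h2 => absurd hy.2 (not_lt.2 h2)⟩⟩
      · exact (isOpen_lt continuous_const (continuous_const.inner hF)).mem_nhds
          (real_inner_self_pos.2 (hF0 x))
      · exact (isOpen_lt continuous_norm continuous_const).mem_nhds (show ‖x‖ < 2 by linarith))
  have hGs : ContDiff ℝ 1 G := G.contMDiff.contDiff
  have hG0 : ∀ x, G x ≠ 0 := fun x hx => by
    have := (hG x).1
    rw [hx] at this
    simp at this
  let : MeasurableSpace E := borel E
  have : BorelSpace E := ⟨rfl⟩
  refine aux_no_retraction (fun x => (2 * ‖G x‖⁻¹) • G x) ?_ 2 (by norm_num) ?_ ?_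
  · exact (contDiff_const.mul ((hGs.norm ℝ hG0).inv (fun x => norm_ne_zero_iff.2 (hG0 x)))).smul hGs
  · intro x hx
    have : G x = x := (hG x).2 hx.ge
    simp [this, hx]
  · intro x
    have := norm_ne_zero_iff.2 (hG0 x)
    simp [norm_smul]
    field_simp

variable {Y : Type*} [NormedAddCommGroup Y] [InnerProductSpace ℝ Y] [FiniteDimensional ℝ Y]

lemma aux_pair_cone (hdim : Module.finrank ℝ Y + 1 < Module.finrank ℝ E) (g : E → Y)
    (hg : ContinuousOn g {0}ᶜ) (hgc : ∃ K : Set Y, IsCompact K ∧ ∀ x, g x ∈ K)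
    (ε : ℝ) (hε : 0 < ε)
    (hgε : ∀ x y, x ≠ 0 → y ≠ 0 → dist (g x) (g y) < ε → ⟪x, y⟫ ≠ 0) : False := by
  classical
  obtain ⟨K, hK, hgK⟩ := hgc
  obtain ⟨T0, -, hT0, hT0c⟩ := hK.finite_cover_balls (half_pos hε)
  lift T0 to Finset Y using hT0
  let φ : ∀ c : Y, ContDiffBump c := fun c => ⟨ε / 4, ε / 2, by positivity, by linarith⟩
  have hφpos : ∀ c y, y ∈ ball c (ε / 2) → 0 < φ c y := fun c y hy => (φ c).pos_of_mem_ball hy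
  have hφzero : ∀ c y, y ∉ ball c (ε / 2) → φ c y = 0 := fun c y hy =>
    (φ c).zero_of_le_dist (by simpa using hy)
  let A : Y → Set E := fun c => {0}ᶜ ∩ g ⁻¹' ball c (ε / 2)
  have hA : ∀ c, IsOpen (A c) := fun c =>
    hg.isOpen_inter_preimage isOpen_compl_singleton isOpen_ball
  obtain ⟨D, hDc, hDd⟩ := TopologicalSpace.exists_countable_dense E
  let N : E → E := fun p => ‖p‖⁻¹ • p
  let P : Set E → E := fun C => if h : (C ∩ D).Nonempty then N h.some else 0
  have hPn : ∀ C, ‖P C‖ ≤ 1 := by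
    intro C
    simp only [P]
    split_ifs with h
    · simp only [N, norm_smul, norm_inv, norm_norm]
      exact inv_mul_le_one
    · simp
  let D' : Set E := insert 0 (N '' D)
  have hD'c : D'.Countable := (hDc.image N).insert 0
  have hPD : ∀ C, P C ∈ D' := by
    intro C
    simp only [P]
    split_ifs with h
    · exact Or.inr ⟨_, h.some_mem.2, rfl⟩
    · exact Or.inl rfl
  have hin : ∀ c x y, x ∈ A c → y ∈ connectedComponentIn (A c) x → 0 < ⟪x, y⟫ := by
    intro c x y hx hy
    have hne : ∀ z ∈ connectedComponentIn (A c) x, ⟪x, z⟫ ≠ 0 := by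
      intro z hz
      have hzA := connectedComponentIn_subset _ _ hz
      refine hgε x z hx.1 hzA.1 ?_
      have h1 : dist (g x) c < ε / 2 := hx.2
      have h2 : dist (g z) c < ε / 2 := hzA.2
      have := dist_triangle_right (g x) (g z) c
      linarith
    by_contra! hc
    have := (isPreconnected_connectedComponentIn (x := x) (F := A c)).intermediate_value hy
      (mem_connectedComponentIn hx) (f := fun z => ⟪x, z⟫) (by fun_prop)
    obtain ⟨z, hz, hz0⟩ := this (show (0 : ℝ) ∈ Icc _ _ from ⟨hc, real_inner_self_nonneg⟩)
    exact hne z hz hz0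
  have hPin : ∀ c x, x ∈ A c → 0 < ⟪x, P (connectedComponentIn (A c) x)⟫ := by
    intro c x hx
    have hne : (connectedComponentIn (A c) x ∩ D).Nonempty :=
      hDd.inter_open_nonempty _ (hA c).connectedComponentIn ⟨x, mem_connectedComponentIn hx⟩
    simp only [P, dif_pos hne, N, real_inner_smul_right]
    have hm := hne.some_mem.1
    refine mul_pos (inv_pos.2 (norm_pos_iff.2 ?_)) (hin c x _ hx hm)
    exact (connectedComponentIn_subset _ _ hm).1
  let H : E → E := fun x => ∑ c ∈ T0, φ c (g x) • P (connectedComponentIn (A c) x)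
  have hHc : ∀ x, x ≠ 0 → ContinuousAt H x := by
    intro x hx
    have hgx : ContinuousAt g x := hg.continuousAt (isOpen_compl_singleton.mem_nhds hx)
    refine tendsto_finsetSum _ fun c _ => ?_
    have hφg : ContinuousAt (fun y => φ c (g y)) x :=
      (φ c).continuous.continuousAt.comp hgx
    by_cases hxA : x ∈ A c
    · have hev : (fun y => φ c (g y) • P (connectedComponentIn (A c) x)) =ᶠ[𝓝 x]
          fun y => φ c (g y) • P (connectedComponentIn (A c) y) := by
        filter_upwards [(hA c).connectedComponentIn.mem_nhds (mem_connectedComponentIn hxA)]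
          with y hy
        rw [connectedComponentIn_eq hy]
      exact (hφg.smul continuousAt_const).congr hev
    · have h0 : φ c (g x) = 0 := hφzero _ _ fun h => hxA ⟨hx, h⟩
      simp only [h0, zero_smul]
      refine squeeze_zero_norm (a := fun y => φ c (g y)) (fun y => ?_) ?_
      · rw [norm_smul, Real.norm_eq_abs, abs_of_nonneg (φ c).nonneg]
        exact mul_le_of_le_one_right (φ c).nonneg (hPn _)
      · simpa [ContinuousAt, h0] using hφg
  have hHn : ∀ x, ‖H x‖ ≤ T0.card := by
    intro x
    refine (norm_sum_le _ _).trans ?_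
    have : ∀ c ∈ T0, ‖φ c (g x) • P (connectedComponentIn (A c) x)‖ ≤ 1 := by
      intro c _
      rw [norm_smul, Real.norm_eq_abs, abs_of_nonneg (φ c).nonneg]
      exact mul_le_one₀ (φ c).le_one (norm_nonneg _) (hPn _)
    simpa using Finset.sum_le_sum this
  have hHpos : ∀ x, x ≠ 0 → 0 < ⟪x, H x⟫ := by
    intro x hx
    simp only [H, inner_sum, real_inner_smul_right]
    have hnn : ∀ c, g x ∈ ball c (ε / 2) →
        0 < φ c (g x) * ⟪x, P (connectedComponentIn (A c) x)⟫ := fun c hc =>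
      mul_pos (hφpos _ _ hc) (hPin c x ⟨hx, hc⟩)
    obtain ⟨c, hcT, hc⟩ := mem_iUnion₂.1 (hT0c (hgK x))
    refine Finset.sum_pos' (fun c _ => ?_) ⟨c, hcT, hnn c hc⟩
    by_cases h : g x ∈ ball c (ε / 2)
    · exact (hnn c h).le
    · rw [hφzero _ _ h, zero_mul]
  obtain ⟨v, hv⟩ : ∃ v : E, ∀ (s : ℝ) (x : E), s • H x ≠ v := by
    have : Countable D' := hD'c.to_subtype
    let Q : (T0 → D') → (ℝ × Y) → E := fun q p => p.1 • ∑ c : T0, φ c.1 p.2 • (q c : E)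
    have hQ : ∀ q, ContDiff ℝ 1 (Q q) := by
      intro q
      refine contDiff_fst.smul (ContDiff.sum fun c _ => ?_)
      exact ((φ c.1).contDiff.comp contDiff_snd).smul contDiff_const
    have hd : dimH (⋃ q, range (Q q)) < Module.finrank ℝ E := by
      rw [dimH_iUnion]
      refine lt_of_le_of_lt (iSup_le fun q => (hQ q).dimH_range_le) ?_
      rw [Module.finrank_prod, Module.finrank_self, add_comm]
      exact_mod_cast hdim
    obtain ⟨v, hv⟩ := (dense_compl_of_dimH_lt_finrank hd).nonempty
    refine ⟨v, fun s x hsx => hv ?_⟩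
    refine mem_iUnion.2 ⟨fun c => ⟨P (connectedComponentIn (A c.1) x), hPD _⟩, (s, g x), ?_⟩
    rw [← hsx]
    simp only [Q, H]
    rw [Finset.sum_coe_sort T0 (fun c => φ c (g x) • P (connectedComponentIn (A c) x))]
  have hv0 : v ≠ 0 := fun h => hv 0 0 (by simp [h])
  let ρ : E → ℝ := fun x => min ‖x‖ 1
  have hρc : Continuous ρ := continuous_norm.min continuous_const
  have hρH : Continuous fun x => ρ x • H x := by
    rw [continuous_iff_continuousAt]
    intro x
    by_cases hx : x = 0
    · subst hx
      have h0 : ρ 0 = 0 := by simp [ρ]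
      simp only [ContinuousAt, h0, zero_smul]
      refine squeeze_zero_norm (a := fun y => ρ y * T0.card) (fun y => ?_) ?_
      · have : 0 ≤ ρ y := le_min (norm_nonneg _) zero_le_one
        rw [norm_smul, Real.norm_eq_abs, abs_of_nonneg this]
        gcongr
        exact hHn y
      · have : Continuous fun y => ρ y * T0.card := hρc.mul continuous_const
        simpa [h0] using this.tendsto 0
    · exact hρc.continuousAt.smul (hHc x hx)
  refine aux_brouwer (fun x => ρ x • H x - (1 - ρ x) • v) ?_ ?_ ?_
  · exact hρH.sub ((continuous_const.sub hρc).smul continuous_const)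
  · intro x hx
    have hx' : ρ x • H x = (1 - ρ x) • v := sub_eq_zero.1 hx
    by_cases h1 : 1 - ρ x = 0
    · have hr : ρ x = 1 := by linarith
      rw [h1, hr, one_smul, zero_smul] at hx'
      have hx0 : x ≠ 0 := by rintro rfl; simp [ρ] at hr
      have := hHpos x hx0
      rw [hx'] at this
      simp at this
    · refine hv ((1 - ρ x)⁻¹ * ρ x) x ?_
      rw [mul_smul, hx', smul_smul, inv_mul_cancel₀ h1, one_smul]
  · intro x hx
    have hr : ρ x = 1 := min_eq_right hx
    have hx0 : x ≠ 0 := by rintro rfl; simp at hx; linarith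
    simpa [hr] using hHpos x hx0

lemma aux_pair (hdim : Module.finrank ℝ Y + 1 < Module.finrank ℝ E)
    (f : sphere (0 : E) 1 → Y) (hf : Continuous f) :
    ∃ x y : sphere (0 : E) 1, ⟪(x : E), (y : E)⟫ = 0 ∧ f x = f y := by
  classical
  by_contra! hno
  have : CompactSpace (sphere (0 : E) 1) := isCompact_iff_compactSpace.1 (isCompact_sphere 0 1)
  let Z : Set (sphere (0 : E) 1 × sphere (0 : E) 1) := {p | ⟪(p.1 : E), (p.2 : E)⟫ = 0}
  have hZ : IsCompact Z := (isClosed_eq (by fun_prop) continuous_const).isCompact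
  obtain ⟨ε, hε, hZε⟩ := hZ.exists_forall_le' (f := fun p => dist (f p.1) (f p.2)) (a := 0)
    (by fun_prop) (fun p hp => dist_pos.2 (hno p.1 p.2 hp))
  have hs : ∀ x : E, x ≠ 0 → ‖x‖⁻¹ • x ∈ sphere (0 : E) 1 := by
    intro x hx
    have := norm_ne_zero_iff.2 hx
    simp [norm_smul, this]
  let g : E → Y := fun x => if h : x ≠ 0 then f ⟨‖x‖⁻¹ • x, hs x h⟩ else 0
  refine aux_pair_cone hdim g ?_ ⟨insert 0 (range f), (isCompact_range hf).insert 0, ?_⟩ ε hε ?_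
  · rw [continuousOn_iff_continuous_domRestrict]
    have : ({0}ᶜ : Set E).domRestrict g = fun x : ({0}ᶜ : Set E) =>
        f ⟨‖(x : E)‖⁻¹ • (x : E), hs x x.2⟩ := by
      ext x
      have : (x : E) ≠ 0 := x.2
      simp [g, this]
    rw [this]
    refine hf.comp (Continuous.subtype_mk ?_ _)
    exact (continuous_subtype_val.norm.inv₀ (fun x => norm_ne_zero_iff.2 x.2)).smul
      continuous_subtype_val
  · intro x
    simp only [g]
    split_ifs with h
    · exact Or.inr ⟨_, rfl⟩
    · exact Or.inl rfl
  · intro x y hx hy hd h0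
    simp only [g, hx, hy, ne_eq, not_false_eq_true, dif_pos] at hd
    refine absurd (hZε (⟨_, hs x hx⟩, ⟨_, hs y hy⟩) ?_) (not_le.2 hd)
    simp [Z, real_inner_smul_left, real_inner_smul_right, h0]

lemma aux_pair_orth (f : sphere (0 : E) 1 → Y) (hf : Continuous f) (s : Finset E)
    (hdim : Module.finrank ℝ Y + 1 + s.card < Module.finrank ℝ E) :
    ∃ x y : sphere (0 : E) 1, ⟪(x : E), (y : E)⟫ = 0 ∧ f x = f y ∧
      ∀ w ∈ s, ⟪w, (x : E)⟫ = 0 ∧ ⟪w, (y : E)⟫ = 0 := by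
  let W := Submodule.span ℝ (s : Set E)
  have h1 : Module.finrank ℝ W ≤ s.card := finrank_span_finset_le_card s
  have h2 := W.finrank_add_finrank_orthogonal
  let ι : sphere (0 : Wᗮ) 1 → sphere (0 : E) 1 := fun x => ⟨((x : Wᗮ) : E), by
    have := mem_sphere_zero_iff_norm.1 x.2
    rw [mem_sphere_zero_iff_norm]; exact this⟩
  have hι : Continuous ι := by
    refine Continuous.subtype_mk ?_ _
    fun_prop
  obtain ⟨x, y, hxy, hf'⟩ := aux_pair (E := Wᗮ) (Y := Y) (by omega) (f ∘ ι) (hf.comp hι)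
  refine ⟨ι x, ι y, by simpa [ι] using hxy, hf', fun w hw => ?_⟩
  have hwW : w ∈ W := Submodule.subset_span hw
  exact ⟨(Submodule.mem_orthogonal _ _).1 x.1.2 w hwW, (Submodule.mem_orthogonal _ _).1 y.1.2 w hwW⟩

end FlipAux2

/-- For every integer `n ≥ 6` and every continuous map
`f : S^{n-1} → ℝ^{⌊(n - r_n - 1)/3⌋}`, there exist pairwise orthogonal
`v₁, …, v₆` in the sphere with `f v₁ = f v₂`, `f v₃ = f v₄`, `f v₅ = f v₆`. -/
theorem flip_stiefel_sphere_three_pairs (n : ℕ) (hn : 6 ≤ n)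
    (f : Metric.sphere (0 : EuclideanSpace ℝ (Fin n)) 1 →
         EuclideanSpace ℝ (Fin ((n - flipStiefelR n - 1) / 3)))
    (hf : Continuous f) :
    ∃ v : Fin 6 → Metric.sphere (0 : EuclideanSpace ℝ (Fin n)) 1,
      (∀ i j : Fin 6, i ≠ j →
        ⟪(v i : EuclideanSpace ℝ (Fin n)), (v j : EuclideanSpace ℝ (Fin n))⟫ = 0) ∧
      f (v 0) = f (v 1) ∧ f (v 2) = f (v 3) ∧ f (v 4) = f (v 5) := by
  classical
  have hm : (n - flipStiefelR n - 1) / 3 + 6 ≤ n := by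
    unfold flipStiefelR
    split_ifs <;> omega
  obtain ⟨a, b, hab, hfab, -⟩ := aux_pair_orth f hf ∅ (by simp; omega)
  obtain ⟨c, d, hcd, hfcd, h1⟩ := aux_pair_orth f hf {(a : EuclideanSpace ℝ (Fin n)), ↑b} (by
    have := Finset.card_le_two (a := (a : EuclideanSpace ℝ (Fin n))) (b := ↑b)
    rw [finrank_euclideanSpace_fin, finrank_euclideanSpace_fin]
    omega)
  obtain ⟨p, q, hpq, hfpq, h2⟩ := aux_pair_orth f hf
    {(a : EuclideanSpace ℝ (Fin n)), ↑b, ↑c, ↑d} (by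
    have := Finset.card_le_four (a := (a : EuclideanSpace ℝ (Fin n))) (b := ↑b) (c := ↑c) (d := ↑d)
    rw [finrank_euclideanSpace_fin, finrank_euclideanSpace_fin]
    omega)
  simp only [Finset.mem_insert, Finset.mem_singleton, forall_eq_or_imp, forall_eq] at h1 h2
  obtain ⟨⟨hac, had⟩, hbc, hbd⟩ := h1
  obtain ⟨⟨hap, haq⟩, ⟨hbp, hbq⟩, ⟨hcp, hcq⟩, hdp, hdq⟩ := h2
  have key : ∀ i j : Fin 6, i < j →
      ⟪((![a, b, c, d, p, q] i : Metric.sphere (0 : EuclideanSpace ℝ (Fin n)) 1) :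
        EuclideanSpace ℝ (Fin n)), ((![a, b, c, d, p, q] j :
        Metric.sphere (0 : EuclideanSpace ℝ (Fin n)) 1) : EuclideanSpace ℝ (Fin n))⟫ = 0 := by
    intro i j hij
    fin_cases i <;> fin_cases j <;> first | (exfalso; revert hij; decide) | assumption
  refine ⟨![a, b, c, d, p, q], fun i j hij => ?_, hfab, hfcd, hfpq⟩
  rcases lt_or_gt_of_ne hij with h | h
  · exact key i j h
  · rw [real_inner_comm]; exact key j i h
end
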